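/- Let λ ≠ 0 be real, ε > 0, k > 1, 0 < η < 1, R > 1/η, 0 < P < X. With S_k(α) = Σ_{δX ≤ p^k ≤ X}(log p)e(p^k α) over primes and K_η(α) = (sin(πηα)/(πα))², one has ∫_{P/X}^{R} |S_k(λα)|⁴ K_η(α) dα ≪ η · max{X^{2/k}, X^{4/k − 1}} · X^{ε}. -/

import Mathlib

open Real MeasureTheory

/-- `e(x) = exp(2πix)` -/
noncomputable def e (x : ℝ) : ℂ := Complex.exp (2 * Real.pi * Complex.I * x)

/-- `S_k(α) = Σ_{δX ≤ p^k ≤ X} (log p) e(p^k α)`, sum over primes `p`. -/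
noncomputable def Sk (δ X k : ℝ) (α : ℝ) : ℂ :=
  ∑ p ∈ (Finset.Icc 1 (Nat.floor X)).filter
      (fun p : ℕ => p.Prime ∧ δ * X ≤ (p : ℝ) ^ k ∧ (p : ℝ) ^ k ≤ X),
    (Real.log p : ℂ) * e ((p : ℝ) ^ k * α)

/-- `K_η(α) = (sin(πηα)/(πα))²` -/
noncomputable def Keta (η α : ℝ) : ℝ := (Real.sin (Real.pi * η * α) / (Real.pi * α)) ^ 2



lemma e_add (x y : ℝ) : e (x + y) = e x * e y := by
  unfold e; rw [← Complex.exp_add]; push_cast; ring_nf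

lemma e_zero : e 0 = 1 := by simp [e]

lemma e_conj (x : ℝ) : (starRingEnd ℂ) (e x) = e (-x) := by
  unfold e; rw [← Complex.exp_conj]
  simp only [map_mul, Complex.conj_ofReal, Complex.conj_I, map_ofNat]
  push_cast; ring_nf

lemma norm_e (x : ℝ) : ‖e x‖ = 1 := by
  unfold e
  have : (2 * Real.pi * Complex.I * x : ℂ) = ((2 * Real.pi * x : ℝ) : ℂ) * Complex.I := by
    push_cast; ring
  rw [this, Complex.norm_exp_ofReal_mul_I]

lemma continuous_e : Continuous e := by unfold e; fun_prop

lemma hasDerivAt_e (x : ℝ) : HasDerivAt e (2 * Real.pi * Complex.I * e x) x := by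
  have h1 : HasDerivAt (fun x : ℝ => (2 * Real.pi * Complex.I * x : ℂ))
      (2 * Real.pi * Complex.I) x := by
    simpa using (Complex.ofRealCLM.hasDerivAt (x := x)).const_mul (2 * Real.pi * Complex.I : ℂ)
  have := h1.cexp
  unfold e
  convert this using 1
  ring

lemma gauss_eq (U : ℝ) (hU : 0 < U) (u x : ℝ) :
    e (x * u) * (Real.exp (-Real.pi * (x / U) ^ 2) : ℂ)
      = Complex.exp (Complex.I * (2 * Real.pi * u : ℝ) * x) *
        Complex.exp (-((Real.pi / U ^ 2 : ℝ) : ℂ) * x ^ 2) := by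
  unfold e
  push_cast
  rw [← Complex.exp_add, ← Complex.exp_add]
  congr 1
  have : (U : ℂ) ≠ 0 := by exact_mod_cast hU.ne'
  field_simp

lemma gauss_integrable (U : ℝ) (hU : 0 < U) (u : ℝ) :
    Integrable (fun x : ℝ => e (x * u) * (Real.exp (-Real.pi * (x / U) ^ 2) : ℂ)) := by
  simp_rw [gauss_eq U hU u]
  have hb : 0 < (((Real.pi / U ^ 2 : ℝ) : ℂ)).re := by
    rw [Complex.ofReal_re]; positivity
  have := GaussianFourier.integrable_cexp_neg_mul_sq_add_real_mul_I hb (0:ℝ)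
  have := integrable_cexp_quadratic hb (Complex.I * (2 * Real.pi * u : ℝ)) 0
  refine this.congr (Filter.Eventually.of_forall fun x => ?_)
  simp only
  rw [← Complex.exp_add]; congr 1; ring

lemma gauss_integral (U : ℝ) (hU : 0 < U) (u : ℝ) :
    ∫ x : ℝ, e (x * u) * (Real.exp (-Real.pi * (x / U) ^ 2) : ℂ)
      = ((U * Real.exp (-Real.pi * U ^ 2 * u ^ 2) : ℝ) : ℂ) := by
  simp_rw [gauss_eq U hU u]
  have hb : 0 < (((Real.pi / U ^ 2 : ℝ) : ℂ)).re := by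
    rw [Complex.ofReal_re]; positivity
  have := fourierIntegral_gaussian hb ((2 * Real.pi * u : ℝ) : ℂ)
  rw [this]
  have hU' : (U : ℂ) ≠ 0 := by exact_mod_cast hU.ne'
  have hpi : (Real.pi : ℂ) ≠ 0 := by exact_mod_cast Real.pi_ne_zero
  have h1 : ((Real.pi : ℂ) / ((Real.pi / U ^ 2 : ℝ) : ℂ)) = ((U ^ 2 : ℝ) : ℂ) := by
    push_cast; field_simp
  rw [h1]
  have h2 : (((U ^ 2 : ℝ) : ℂ)) ^ (1 / 2 : ℂ) = (U : ℂ) := by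
    have : (1 / 2 : ℂ) = ((1 / 2 : ℝ) : ℂ) := by push_cast; rfl
    rw [this, ← Complex.ofReal_cpow (by positivity), ← Real.sqrt_eq_rpow, Real.sqrt_sq hU.le]
  rw [h2]
  push_cast
  congr 2
  field_simp
  ring

/-- Gaussian-smoothed count of near coincidences. -/
noncomputable def Q2 {ι : Type*} (I : Finset ι) (w ω : ι → ℝ) (U : ℝ) : ℝ :=
  ∑ i ∈ I, ∑ j ∈ I, w i * w j * Real.exp (-Real.pi * U ^ 2 * (ω i - ω j) ^ 2)

lemma sq_expand {ι : Type*} (I : Finset ι) (c : ι → ℂ) (ω : ι → ℝ) (U x : ℝ) :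
    ((‖∑ i ∈ I, c i * e (x * ω i)‖ ^ 2 * Real.exp (-Real.pi * (x / U) ^ 2) : ℝ) : ℂ)
      = ∑ i ∈ I, ∑ j ∈ I, (c i * (starRingEnd ℂ) (c j)) *
        (e (x * (ω i - ω j)) * (Real.exp (-Real.pi * (x / U) ^ 2) : ℂ)) := by
  have h : ((‖∑ i ∈ I, c i * e (x * ω i)‖ ^ 2 : ℝ) : ℂ)
      = (∑ i ∈ I, c i * e (x * ω i)) * (starRingEnd ℂ) (∑ i ∈ I, c i * e (x * ω i)) := by
    rw [Complex.mul_conj, Complex.normSq_eq_norm_sq]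
  rw [Complex.ofReal_mul, h, map_sum, Finset.sum_mul_sum, Finset.sum_mul]
  refine Finset.sum_congr rfl fun i _ => ?_
  rw [Finset.sum_mul]
  refine Finset.sum_congr rfl fun j _ => ?_
  rw [map_mul, e_conj]
  have : e (x * (ω i - ω j)) = e (x * ω i) * e (-(x * ω j)) := by
    rw [← e_add]; ring_nf
  rw [this]; ring

lemma sq_integrable {ι : Type*} (I : Finset ι) (c : ι → ℂ) (ω : ι → ℝ) (U : ℝ) (hU : 0 < U) :
    Integrable (fun x : ℝ =>
      ‖∑ i ∈ I, c i * e (x * ω i)‖ ^ 2 * Real.exp (-Real.pi * (x / U) ^ 2)) := by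
  have : Integrable (fun x : ℝ =>
      ((‖∑ i ∈ I, c i * e (x * ω i)‖ ^ 2 * Real.exp (-Real.pi * (x / U) ^ 2) : ℝ) : ℂ)) := by
    simp_rw [sq_expand]
    refine integrable_finsetSum _ fun i _ => integrable_finsetSum _ fun j _ => ?_
    exact (gauss_integrable U hU _).const_mul _
  have h := this.re
  simp only [RCLike.re_to_complex, Complex.ofReal_re] at h
  exact h

lemma sq_integral {ι : Type*} (I : Finset ι) (c : ι → ℂ) (ω : ι → ℝ) (U : ℝ) (hU : 0 < U) :
    ((∫ x : ℝ, ‖∑ i ∈ I, c i * e (x * ω i)‖ ^ 2 * Real.exp (-Real.pi * (x / U) ^ 2) : ℝ) : ℂ)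
      = ∑ i ∈ I, ∑ j ∈ I, (c i * (starRingEnd ℂ) (c j)) *
        ((U * Real.exp (-Real.pi * U ^ 2 * (ω i - ω j) ^ 2) : ℝ) : ℂ) := by
  rw [← integral_complex_ofReal]
  simp_rw [sq_expand]
  rw [integral_finsetSum _ fun i _ => integrable_finsetSum _ fun j _ =>
    (gauss_integrable U hU _).const_mul _]
  refine Finset.sum_congr rfl fun i _ => ?_
  rw [integral_finsetSum _ fun j _ => (gauss_integrable U hU _).const_mul _]
  refine Finset.sum_congr rfl fun j _ => ?_
  rw [integral_const_mul, gauss_integral U hU]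

lemma sq_integral_eq {ι : Type*} (I : Finset ι) (w : ι → ℝ) (ω : ι → ℝ) (U : ℝ) (hU : 0 < U) :
    (∫ x : ℝ, ‖∑ i ∈ I, (w i : ℂ) * e (x * ω i)‖ ^ 2 * Real.exp (-Real.pi * (x / U) ^ 2))
      = U * Q2 I w ω U := by
  have := sq_integral I (fun i => (w i : ℂ)) ω U hU
  apply Complex.ofReal_injective
  rw [this, Q2, Finset.mul_sum]
  push_cast
  refine Finset.sum_congr rfl fun i _ => ?_
  rw [Finset.mul_sum]
  refine Finset.sum_congr rfl fun j _ => ?_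
  rw [Complex.conj_ofReal]; ring

lemma sq_integral_le {ι : Type*} (I : Finset ι) (c : ι → ℂ) (w : ι → ℝ) (ω : ι → ℝ)
    (hc : ∀ i ∈ I, ‖c i‖ ≤ w i) (U : ℝ) (hU : 0 < U) :
    (∫ x : ℝ, ‖∑ i ∈ I, c i * e (x * ω i)‖ ^ 2 * Real.exp (-Real.pi * (x / U) ^ 2))
      ≤ U * Q2 I w ω U := by
  have := sq_integral I c ω U hU
  refine (le_abs_self _).trans ?_
  rw [← Real.norm_eq_abs, ← Complex.norm_real, this, Q2, Finset.mul_sum]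
  refine (norm_sum_le _ _).trans (Finset.sum_le_sum fun i hi => ?_)
  rw [Finset.mul_sum]
  refine (norm_sum_le _ _).trans (Finset.sum_le_sum fun j hj => ?_)
  rw [norm_mul, norm_mul, RCLike.norm_conj, Complex.norm_real, Real.norm_eq_abs,
    abs_of_nonneg (by positivity)]
  have h1 := hc i hi
  have h2 := hc j hj
  have : ‖c i‖ * ‖c j‖ ≤ w i * w j :=
    mul_le_mul h1 h2 (norm_nonneg _) ((norm_nonneg _).trans h1)
  calc _ ≤ (w i * w j) * (U * Real.exp (-Real.pi * U ^ 2 * (ω i - ω j) ^ 2)) := by gcongr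
    _ = _ := by ring

lemma Q2_nonneg {ι : Type*} (I : Finset ι) (w ω : ι → ℝ) (hw : ∀ i ∈ I, 0 ≤ w i) (U : ℝ) :
    0 ≤ Q2 I w ω U :=
  Finset.sum_nonneg fun i hi => Finset.sum_nonneg fun j hj =>
    mul_nonneg (mul_nonneg (hw i hi) (hw j hj)) (Real.exp_pos _).le

lemma Q2_anti {ι : Type*} (I : Finset ι) (w ω : ι → ℝ) (hw : ∀ i ∈ I, 0 ≤ w i) {U U' : ℝ}
    (hU : 0 ≤ U) (h : U ≤ U') : Q2 I w ω U' ≤ Q2 I w ω U := by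
  refine Finset.sum_le_sum fun i hi => Finset.sum_le_sum fun j hj => ?_
  refine mul_le_mul_of_nonneg_left ?_ (mul_nonneg (hw i hi) (hw j hj))
  refine Real.exp_le_exp.2 ?_
  have h2 : U ^ 2 ≤ U' ^ 2 := by gcongr
  have := mul_le_mul_of_nonneg_right h2 (mul_nonneg Real.pi_pos.le (sq_nonneg (ω i - ω j)))
  nlinarith

lemma Q2_mono_w {ι : Type*} (I J : Finset ι) (hIJ : I ⊆ J) (w w' ω : ι → ℝ)
    (hw : ∀ i ∈ I, 0 ≤ w i) (hw' : ∀ i ∈ J, 0 ≤ w' i)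
    (hww : ∀ i ∈ I, w i ≤ w' i) (U : ℝ) : Q2 I w ω U ≤ Q2 J w' ω U := by
  calc Q2 I w ω U ≤ ∑ i ∈ I, ∑ j ∈ J, w' i * w' j *
        Real.exp (-Real.pi * U ^ 2 * (ω i - ω j) ^ 2) := by
        refine Finset.sum_le_sum fun i hi => ?_
        calc _ ≤ ∑ j ∈ I, w' i * w' j * Real.exp (-Real.pi * U ^ 2 * (ω i - ω j) ^ 2) := by
              refine Finset.sum_le_sum fun j hj => ?_
              refine mul_le_mul_of_nonneg_right ?_ (Real.exp_pos _).le
              exact mul_le_mul (hww i hi) (hww j hj) (hw j hj) (hw' i (hIJ hi))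
          _ ≤ _ := Finset.sum_le_sum_of_subset_of_nonneg hIJ fun j hj _ =>
              mul_nonneg (mul_nonneg (hw' i (hIJ hi)) (hw' j hj)) (Real.exp_pos _).le
    _ ≤ _ := Finset.sum_le_sum_of_subset_of_nonneg hIJ fun i hi _ =>
        Finset.sum_nonneg fun j hj =>
          mul_nonneg (mul_nonneg (hw' i hi) (hw' j hj)) (Real.exp_pos _).le

/-- localisation: the Gaussian can be truncated at `U`. -/
lemma Q2_le_trunc {ι : Type*} (I : Finset ι) (w ω : ι → ℝ) (hw : ∀ i ∈ I, 0 ≤ w i) {U : ℝ}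
    (hU : 0 < U) :
    Q2 I w ω U ≤ 2 / U * ∫ x in (-U)..U, ‖∑ i ∈ I, (w i : ℂ) * e (x * ω i)‖ ^ 2 := by
  set F : ℝ → ℝ := fun x => ‖∑ i ∈ I, (w i : ℂ) * e (x * ω i)‖ ^ 2 with hF
  have hFc : Continuous F := by
    rw [hF]
    have := continuous_e
    fun_prop
  have hF0 : ∀ x, 0 ≤ F x := fun x => by positivity
  have e1 := sq_integral_eq I w ω U hU
  have e2 := sq_integral_eq I w ω (2 * U) (by positivity)
  have i1 := sq_integrable I (fun i => (w i : ℂ)) ω U hU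
  have i2 := sq_integrable I (fun i => (w i : ℂ)) ω (2 * U) (by positivity)
  have i3 : Integrable ((Set.Ioc (-U) U).indicator F) := by
    rw [integrable_indicator_iff measurableSet_Ioc]
    exact (hFc.integrableOn_Icc).mono_set Set.Ioc_subset_Icc_self
  have hexp : Real.exp (-2) ≤ 1 / 4 := by
    have := Real.exp_one_gt_d9
    rw [Real.exp_neg, show (2:ℝ) = 1 + 1 by norm_num, Real.exp_add, one_div]
    apply inv_anti₀ (by norm_num); nlinarith
  have key : ∀ x, F x * Real.exp (-Real.pi * (x / U) ^ 2) ≤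
      (Set.Ioc (-U) U).indicator F x + 1 / 4 * (F x * Real.exp (-Real.pi * (x / (2 * U)) ^ 2)) := by
    intro x
    by_cases hx : x ∈ Set.Ioc (-U) U
    · rw [Set.indicator_of_mem hx]
      have h1 : Real.exp (-Real.pi * (x / U) ^ 2) ≤ 1 := by
        apply Real.exp_le_one_iff.2
        have : 0 ≤ Real.pi * (x / U) ^ 2 := by positivity
        linarith
      have h2 := mul_le_mul_of_nonneg_left h1 (hF0 x)
      have h3 : 0 ≤ 1 / 4 * (F x * Real.exp (-Real.pi * (x / (2 * U)) ^ 2)) :=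
        mul_nonneg (by norm_num) (mul_nonneg (hF0 x) (Real.exp_pos _).le)
      linarith
    · rw [Set.indicator_of_notMem hx, zero_add]
      have hx2 : 1 ≤ (x / U) ^ 2 := by
        rw [div_pow, le_div_iff₀ (by positivity), one_mul]
        simp only [Set.mem_Ioc, not_and_or, not_lt, not_le] at hx
        rcases hx with hx | hx <;> nlinarith
      have h4 : Real.exp (-Real.pi * (x / U) ^ 2) ≤
          1 / 4 * Real.exp (-Real.pi * (x / (2 * U)) ^ 2) := by
        have : -Real.pi * (x / U) ^ 2 ≤ -2 + (-Real.pi * (x / (2 * U)) ^ 2) := by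
          have h5 : (x / (2 * U)) ^ 2 = (x / U) ^ 2 / 4 := by
            field_simp; ring
          rw [h5]; nlinarith [Real.pi_gt_three]
        calc _ ≤ Real.exp (-2 + (-Real.pi * (x / (2 * U)) ^ 2)) := Real.exp_le_exp.2 this
          _ = Real.exp (-2) * Real.exp (-Real.pi * (x / (2 * U)) ^ 2) := Real.exp_add _ _
          _ ≤ _ := by gcongr
      calc _ ≤ F x * (1 / 4 * Real.exp (-Real.pi * (x / (2 * U)) ^ 2)) :=
            mul_le_mul_of_nonneg_left h4 (hF0 x)
        _ = _ := by ring
  have hInt := integral_mono i1 (i3.add (i2.const_mul (1/4))) key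
  rw [e1] at hInt
  rw [integral_add' i3 (i2.const_mul _), integral_const_mul, e2,
      integral_indicator measurableSet_Ioc, ← intervalIntegral.integral_of_le (by linarith)] at hInt
  have hanti := Q2_anti I w ω hw hU.le (show U ≤ 2 * U by linarith)
  have : U * Q2 I w ω U ≤ 2 * ∫ x in (-U)..U, F x := by nlinarith
  rw [div_mul_eq_mul_div, le_div_iff₀ hU]
  linarith


/-- Gaussian-smoothed additive energy. -/
noncomputable def Q4 (S : Finset ℕ) (w ω : ℕ → ℝ) (U : ℝ) : ℝ :=
  Q2 (S ×ˢ S) (fun p => w p.1 * w p.2) (fun p => ω p.1 + ω p.2) U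

lemma four_eq (S : Finset ℕ) (c : ℕ → ℂ) (ω : ℕ → ℝ) (x : ℝ) :
    ‖∑ n ∈ S, c n * e (x * ω n)‖ ^ 4 =
      ‖∑ p ∈ S ×ˢ S, (c p.1 * c p.2) * e (x * (ω p.1 + ω p.2))‖ ^ 2 := by
  have : ∑ p ∈ S ×ˢ S, (c p.1 * c p.2) * e (x * (ω p.1 + ω p.2)) =
      (∑ n ∈ S, c n * e (x * ω n)) ^ 2 := by
    rw [sq, Finset.sum_mul_sum, Finset.sum_product]
    refine Finset.sum_congr rfl fun i _ => Finset.sum_congr rfl fun j _ => ?_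
    rw [mul_add, e_add]; ring
  rw [this, norm_pow]; ring

lemma four_integrable (S : Finset ℕ) (c : ℕ → ℂ) (ω : ℕ → ℝ) (U : ℝ) (hU : 0 < U) :
    Integrable (fun x : ℝ =>
      ‖∑ n ∈ S, c n * e (x * ω n)‖ ^ 4 * Real.exp (-Real.pi * (x / U) ^ 2)) := by
  simp_rw [four_eq]
  exact sq_integrable _ _ _ U hU

lemma four_le (S : Finset ℕ) (c : ℕ → ℂ) (w ω : ℕ → ℝ) (hc : ∀ n ∈ S, ‖c n‖ ≤ w n)
    (U : ℝ) (hU : 0 < U) :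
    (∫ x : ℝ, ‖∑ n ∈ S, c n * e (x * ω n)‖ ^ 4 * Real.exp (-Real.pi * (x / U) ^ 2))
      ≤ U * Q4 S w ω U := by
  simp_rw [four_eq]
  refine sq_integral_le (S ×ˢ S) (fun p => c p.1 * c p.2) _ (fun p => ω p.1 + ω p.2) ?_ U hU
  intro p hp
  rw [Finset.mem_product] at hp
  rw [norm_mul]
  exact mul_le_mul (hc _ hp.1) (hc _ hp.2) (norm_nonneg _) ((norm_nonneg _).trans (hc _ hp.1))

lemma shift_eq (S : Finset ℕ) (c : ℕ → ℂ) (ω : ℕ → ℝ) (U x₀ : ℝ) :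
    (fun x : ℝ => ‖∑ n ∈ S, c n * e (x * ω n)‖ ^ 4 *
        Real.exp (-Real.pi * ((x - x₀) / U) ^ 2)) = fun x =>
      (fun y : ℝ => ‖∑ n ∈ S, (c n * e (x₀ * ω n)) * e (y * ω n)‖ ^ 4 *
        Real.exp (-Real.pi * (y / U) ^ 2)) (x - x₀) := by
  funext x
  simp only
  congr 3
  refine Finset.sum_congr rfl fun n _ => ?_
  rw [mul_assoc, ← e_add]; ring_nf

lemma four_integrable_shift (S : Finset ℕ) (c : ℕ → ℂ) (ω : ℕ → ℝ) (U x₀ : ℝ) (hU : 0 < U) :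
    Integrable (fun x : ℝ =>
      ‖∑ n ∈ S, c n * e (x * ω n)‖ ^ 4 * Real.exp (-Real.pi * ((x - x₀) / U) ^ 2)) := by
  rw [shift_eq]
  exact (four_integrable S (fun n => c n * e (x₀ * ω n)) ω U hU).comp_sub_right x₀

lemma four_le_shift (S : Finset ℕ) (c : ℕ → ℂ) (w ω : ℕ → ℝ) (hc : ∀ n ∈ S, ‖c n‖ ≤ w n)
    (U x₀ : ℝ) (hU : 0 < U) :
    (∫ x : ℝ, ‖∑ n ∈ S, c n * e (x * ω n)‖ ^ 4 * Real.exp (-Real.pi * ((x - x₀) / U) ^ 2))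
      ≤ U * Q4 S w ω U := by
  rw [shift_eq, integral_sub_right_eq_self (fun y : ℝ =>
    ‖∑ n ∈ S, (c n * e (x₀ * ω n)) * e (y * ω n)‖ ^ 4 * Real.exp (-Real.pi * (y / U) ^ 2)) x₀]
  apply four_le S (fun n => c n * e (x₀ * ω n)) w ω _ U hU
  intro n hn
  rw [norm_mul, norm_e, mul_one]; exact hc n hn

lemma Q4_nonneg (S : Finset ℕ) (w ω : ℕ → ℝ) (hw : ∀ n ∈ S, 0 ≤ w n) (U : ℝ) :
    0 ≤ Q4 S w ω U := by
  refine Q2_nonneg _ _ _ (fun p hp => ?_) U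
  rw [Finset.mem_product] at hp
  exact mul_nonneg (hw _ hp.1) (hw _ hp.2)

lemma Q4_anti (S : Finset ℕ) (w ω : ℕ → ℝ) (hw : ∀ n ∈ S, 0 ≤ w n) {U U' : ℝ}
    (hU : 0 ≤ U) (h : U ≤ U') : Q4 S w ω U' ≤ Q4 S w ω U := by
  refine Q2_anti _ _ _ (fun p hp => ?_) hU h
  rw [Finset.mem_product] at hp
  exact mul_nonneg (hw _ hp.1) (hw _ hp.2)

lemma Q4_mono (S S' : Finset ℕ) (hS : S ⊆ S') (w w' ω : ℕ → ℝ) (hw : ∀ n ∈ S, 0 ≤ w n)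
    (hw' : ∀ n ∈ S', 0 ≤ w' n) (hww : ∀ n ∈ S, w n ≤ w' n) (U : ℝ) :
    Q4 S w ω U ≤ Q4 S' w' ω U := by
  refine Q2_mono_w _ _ (Finset.product_subset_product hS hS) _ _ _ ?_ ?_ ?_ U
  · intro p hp
    rw [Finset.mem_product] at hp
    exact mul_nonneg (hw _ hp.1) (hw _ hp.2)
  · intro p hp
    rw [Finset.mem_product] at hp
    exact mul_nonneg (hw' _ hp.1) (hw' _ hp.2)
  · intro p hp
    rw [Finset.mem_product] at hp
    exact mul_le_mul (hww _ hp.1) (hww _ hp.2) (hw _ hp.2) (hw' _ (hS hp.1))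

lemma Q4_le_card (S : Finset ℕ) (ω : ℕ → ℝ) (U : ℝ) :
    Q4 S (fun _ => 1) ω U ≤ (S.card : ℝ) ^ 4 := by
  unfold Q4 Q2
  calc _ ≤ ∑ i ∈ S ×ˢ S, ∑ j ∈ S ×ˢ S, (1 : ℝ) := by
        refine Finset.sum_le_sum fun i _ => Finset.sum_le_sum fun j _ => ?_
        simp only [mul_one, one_mul]
        apply Real.exp_le_one_iff.2
        have : 0 ≤ Real.pi * U ^ 2 * (ω i.1 + ω i.2 - (ω j.1 + ω j.2)) ^ 2 := by positivity
        linarith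
    _ = _ := by
        simp only [Finset.sum_const, Finset.card_product, nsmul_eq_mul]
        push_cast; ring

lemma Q4_scale_w (S : Finset ℕ) (ω : ℕ → ℝ) (L U : ℝ) :
    Q4 S (fun _ => L) ω U = L ^ 4 * Q4 S (fun _ => 1) ω U := by
  unfold Q4 Q2
  rw [Finset.mul_sum]
  refine Finset.sum_congr rfl fun i _ => ?_
  rw [Finset.mul_sum]
  refine Finset.sum_congr rfl fun j _ => ?_
  ring

lemma Q4_scale_freq (S : Finset ℕ) (w ω : ℕ → ℝ) (l U : ℝ) :
    Q4 S w (fun n => l * ω n) U = Q4 S w ω (|l| * U) := by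
  unfold Q4 Q2
  refine Finset.sum_congr rfl fun i _ => Finset.sum_congr rfl fun j _ => ?_
  congr 2
  rw [mul_pow, sq_abs]; ring

lemma Q4_le_trunc (S : Finset ℕ) (w ω : ℕ → ℝ) (hw : ∀ n ∈ S, 0 ≤ w n) {U : ℝ} (hU : 0 < U) :
    Q4 S w ω U ≤ 4 / U * ∫ x in (0:ℝ)..U, ‖∑ n ∈ S, (w n : ℂ) * e (x * ω n)‖ ^ 4 := by
  have h := Q2_le_trunc (S ×ˢ S) (fun p => w p.1 * w p.2) (fun p => ω p.1 + ω p.2) (by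
    intro p hp
    rw [Finset.mem_product] at hp
    exact mul_nonneg (hw _ hp.1) (hw _ hp.2)) hU
  have h4 := four_eq S (fun n => (w n : ℂ)) ω
  simp only [← Complex.ofReal_mul] at h4
  simp only [← h4] at h
  set F : ℝ → ℝ := fun x => ‖∑ n ∈ S, (w n : ℂ) * e (x * ω n)‖ ^ 4 with hF
  have hFc : Continuous F := by
    rw [hF]
    have := continuous_e
    fun_prop
  have hsym : ∀ x, F (-x) = F x := by
    intro x
    simp only [hF]
    congr 1
    rw [← RCLike.norm_conj, map_sum]
    congr 1
    refine Finset.sum_congr rfl fun n _ => ?_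
    rw [map_mul, e_conj, Complex.conj_ofReal]; ring_nf
  have hneg : ∫ x in (-U)..0, F x = ∫ x in (0:ℝ)..U, F x := by
    have := intervalIntegral.integral_comp_neg (f := F) (a := 0) (b := U)
    simp only [hsym, neg_zero] at this
    exact this.symm
  have hsplit : ∫ x in (-U)..U, F x = 2 * ∫ x in (0:ℝ)..U, F x := by
    rw [← intervalIntegral.integral_add_adjacent_intervals (hFc.intervalIntegrable (-U) 0)
      (hFc.intervalIntegrable 0 U), hneg]; ring
  calc _ ≤ _ := h
    _ = _ := by
      rw [show (∫ x in (-U)..U, ‖∑ n ∈ S, (w n : ℂ) * e (x * ω n)‖ ^ 4) =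
        ∫ x in (-U)..U, F x from rfl, hsplit]
      ring


/-- integration by parts against `e(φ)`. -/
lemma ibp_e {A B : ℝ} (hAB : A ≤ B) {v v' φ φ' : ℝ → ℝ}
    (hv : ∀ t ∈ Set.Icc A B, HasDerivAt v (v' t) t)
    (hφ : ∀ t ∈ Set.Icc A B, HasDerivAt φ (φ' t) t)
    (hv' : ContinuousOn v' (Set.Icc A B)) (hφ' : ContinuousOn φ' (Set.Icc A B))
    (hA : v A = 0) (hB : v B = 0) :
    ∫ t in A..B, ((v t * φ' t : ℝ) : ℂ) * e (φ t)
      = -(1 / (2 * Real.pi * Complex.I)) * ∫ t in A..B, ((v' t : ℝ) : ℂ) * e (φ t) := by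
  have hu : Set.uIcc A B = Set.Icc A B := Set.uIcc_of_le hAB
  have hφc : ContinuousOn φ (Set.Icc A B) := fun t ht => (hφ t ht).continuousAt.continuousWithinAt
  have hvc : ContinuousOn v (Set.Icc A B) := fun t ht => (hv t ht).continuousAt.continuousWithinAt
  have hec : ContinuousOn (fun t => e (φ t)) (Set.Icc A B) := continuous_e.comp_continuousOn hφc
  have hofv : ∀ t ∈ Set.uIcc A B, HasDerivAt (fun t => (v t : ℂ)) (v' t : ℂ) t := by
    intro t ht; rw [hu] at ht; exact (hv t ht).ofReal_comp
  have hofe : ∀ t ∈ Set.uIcc A B, HasDerivAt (fun t => e (φ t))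
      ((φ' t : ℂ) * (2 * Real.pi * Complex.I * e (φ t))) t := by
    intro t ht; rw [hu] at ht
    have := (hasDerivAt_e (φ t)).scomp t (hφ t ht)
    rw [Complex.real_smul] at this
    exact this
  have hi1 : IntervalIntegrable (fun t => (v' t : ℂ)) volume A B := by
    apply ContinuousOn.intervalIntegrable; rw [hu]
    exact Complex.continuous_ofReal.comp_continuousOn hv'
  have hi2 : IntervalIntegrable (fun t => (φ' t : ℂ) * (2 * Real.pi * Complex.I * e (φ t)))
      volume A B := by
    apply ContinuousOn.intervalIntegrable; rw [hu]
    exact (Complex.continuous_ofReal.comp_continuousOn hφ').mul (continuousOn_const.mul hec)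
  have := intervalIntegral.integral_mul_deriv_eq_deriv_mul hofv hofe hi1 hi2
  rw [hA, hB] at this
  simp only [Complex.ofReal_zero, zero_mul, sub_self, zero_sub] at this
  have h2 : (2 * Real.pi * Complex.I : ℂ) ≠ 0 := by
    simp [Real.pi_ne_zero]
  have h3 : ∫ t in A..B, (v t : ℂ) * ((φ' t : ℂ) * (2 * Real.pi * Complex.I * e (φ t)))
      = (2 * Real.pi * Complex.I) * ∫ t in A..B, ((v t * φ' t : ℝ) : ℂ) * e (φ t) := by
    rw [← intervalIntegral.integral_const_mul]
    refine intervalIntegral.integral_congr fun t _ => ?_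
    push_cast; ring
  rw [h3] at this
  rw [neg_mul, ← mul_neg, ← this]
  field_simp

/-- van der Corput second derivative test with amplitude. -/
lemma vdc2 {A B : ℝ} (hAB : A ≤ B) {u u' φ φ' φ'' : ℝ → ℝ} {D lam : ℝ} (hlam : 0 < lam)
    (hu : ∀ t ∈ Set.Icc A B, HasDerivAt u (u' t) t)
    (hφ : ∀ t ∈ Set.Icc A B, HasDerivAt φ (φ' t) t)
    (hφ2 : ∀ t ∈ Set.Icc A B, HasDerivAt φ' (φ'' t) t)
    (hu' : ContinuousOn u' (Set.Icc A B)) (hφc : ContinuousOn φ'' (Set.Icc A B))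
    (hA : u A = 0) (hB : u B = 0) (hD : ∀ t ∈ Set.Icc A B, |u' t| ≤ D)
    (hl : ∀ t ∈ Set.Icc A B, lam ≤ φ'' t) :
    ‖∫ t in A..B, ((u t : ℝ) : ℂ) * e (φ t)‖ ≤ 4 * (D * (B - A)) / Real.sqrt lam := by
  have hU : Set.uIcc A B = Set.Icc A B := Set.uIcc_of_le hAB
  set r : ℝ := 1 / Real.sqrt lam with hr
  have hr0 : 0 < r := by positivity
  have hrl : r * lam = 1 / r := by
    rw [hr]; field_simp; rw [Real.sq_sqrt hlam.le]
  have hD0 : 0 ≤ D := (abs_nonneg _).trans (hD A ⟨le_rfl, hAB⟩)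
  have hucont : ContinuousOn u (Set.Icc A B) := fun t ht => (hu t ht).continuousAt.continuousWithinAt
  have hφcont : ContinuousOn φ (Set.Icc A B) := fun t ht => (hφ t ht).continuousAt.continuousWithinAt
  have hφ'cont : ContinuousOn φ' (Set.Icc A B) :=
    fun t ht => (hφ2 t ht).continuousAt.continuousWithinAt
  have hecont : ContinuousOn (fun t => e (φ t)) (Set.Icc A B) := continuous_e.comp_continuousOn hφcont
  have hub : ∀ t ∈ Set.Icc A B, |u t| ≤ D * (B - A) := by
    intro t ht
    have := Convex.norm_image_sub_le_of_norm_hasDerivWithin_le (f := u) (f' := u') (s := Set.Icc A B)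
      (x := A) (y := t) (C := D) (fun x hx => (hu x hx).hasDerivWithinAt) (fun x hx => hD x hx)
      (convex_Icc A B) ⟨le_rfl, hAB⟩ ht
    rw [hA, sub_zero, Real.norm_eq_abs, Real.norm_eq_abs, abs_of_nonneg (sub_nonneg.2 ht.1)] at this
    refine this.trans ?_
    gcongr; exact ht.2
  set ρ : ℝ → ℝ := fun t => r * φ' t with hρ
  set v : ℝ → ℝ := fun t => u t * (r * (ρ t / (1 + ρ t ^ 2))) with hv
  set v' : ℝ → ℝ := fun t => u' t * (r * (ρ t / (1 + ρ t ^ 2))) +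
    u t * (r * ((r * φ'' t) * (1 - ρ t ^ 2) / (1 + ρ t ^ 2) ^ 2)) with hv'
  have hpos : ∀ t, 0 < 1 + ρ t ^ 2 := fun t => by positivity
  have hρd : ∀ t ∈ Set.Icc A B, HasDerivAt ρ (r * φ'' t) t := fun t ht => (hφ2 t ht).const_mul r
  have hρcont : ContinuousOn ρ (Set.Icc A B) :=
    fun t ht => (hρd t ht).continuousAt.continuousWithinAt
  have hvd : ∀ t ∈ Set.Icc A B, HasDerivAt v (v' t) t := by
    intro t ht
    have h1 := hρd t ht
    have h2 : HasDerivAt (fun t => 1 + ρ t ^ 2) (2 * ρ t * (r * φ'' t)) t := by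
      have := (h1.pow 2).const_add 1
      simpa using this
    have h3 := (h1.div h2 (hpos t).ne').const_mul r
    have h4 := (hu t ht).mul h3
    have h5 : v' t = u' t * (r * (ρ t / (1 + ρ t ^ 2))) + u t * (r * (((r * φ'' t) * (1 + ρ t ^ 2) -
        ρ t * (2 * ρ t * (r * φ'' t))) / (1 + ρ t ^ 2) ^ 2)) := by
      simp only [hv']; ring
    rw [h5]; exact h4
  have hv'c : ContinuousOn v' (Set.Icc A B) := by
    have hne : ∀ t ∈ Set.Icc A B, 1 + ρ t ^ 2 ≠ 0 := fun t _ => (hpos t).ne'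
    have hne2 : ∀ t ∈ Set.Icc A B, (1 + ρ t ^ 2) ^ 2 ≠ 0 := fun t _ => pow_ne_zero 2 (hpos t).ne'
    have c1 : ContinuousOn (fun t => 1 + ρ t ^ 2) (Set.Icc A B) :=
      continuousOn_const.add (hρcont.pow 2)
    exact (hu'.mul (continuousOn_const.mul (hρcont.div c1 hne))).add
      (hucont.mul (continuousOn_const.mul
        (((continuousOn_const.mul hφc).mul (continuousOn_const.sub (hρcont.pow 2))).div
          (c1.pow 2) hne2)))
  have hparts := ibp_e hAB hvd hφ hv'c hφ'cont (by simp [hv, hA]) (by simp [hv, hB])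
  set g : ℝ → ℝ := fun t => u t * (1 / (1 + ρ t ^ 2)) with hg
  have hgc : ContinuousOn g (Set.Icc A B) := by
    have hne : ∀ t ∈ Set.Icc A B, 1 + ρ t ^ 2 ≠ 0 := fun t _ => (hpos t).ne'
    exact hucont.mul (continuousOn_const.div (continuousOn_const.add (hρcont.pow 2)) hne)
  have hvc : ContinuousOn v (Set.Icc A B) := fun t ht => (hvd t ht).continuousAt.continuousWithinAt
  have hdec : ∫ t in A..B, ((u t : ℝ) : ℂ) * e (φ t) =
      (∫ t in A..B, ((g t : ℝ) : ℂ) * e (φ t)) + ∫ t in A..B, ((v t * φ' t : ℝ) : ℂ) * e (φ t) := by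
    rw [← intervalIntegral.integral_add]
    · refine intervalIntegral.integral_congr fun t _ => ?_
      rw [← add_mul, ← Complex.ofReal_add]
      congr 2
      simp only [hg, hv]
      have := (hpos t).ne'
      have h5 : r * φ' t = ρ t := rfl
      have : u t * (r * (ρ t / (1 + ρ t ^ 2))) * φ' t = u t * (ρ t ^ 2 / (1 + ρ t ^ 2)) := by
        rw [← h5]; ring
      rw [this]
      have := (hpos t).ne'
      field_simp
    · apply ContinuousOn.intervalIntegrable; rw [hU]
      exact (Complex.continuous_ofReal.comp_continuousOn hgc).mul hecont
    · apply ContinuousOn.intervalIntegrable; rw [hU]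
      exact (Complex.continuous_ofReal.comp_continuousOn (hvc.mul hφ'cont)).mul hecont
  rw [hdec, hparts]
  set K : ℝ → ℝ := fun t => r * φ'' t / (1 + ρ t ^ 2) with hK
  have hKc : ContinuousOn K (Set.Icc A B) := by
    have hne : ∀ t ∈ Set.Icc A B, 1 + ρ t ^ 2 ≠ 0 := fun t _ => (hpos t).ne'
    exact (continuousOn_const.mul hφc).div (continuousOn_const.add (hρcont.pow 2)) hne
  have hKi : IntervalIntegrable K volume A B := by
    apply ContinuousOn.intervalIntegrable; rw [hU]; exact hKc
  have hKint : ∫ t in A..B, K t ≤ Real.pi := by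
    have : ∫ t in A..B, K t = Real.arctan (ρ B) - Real.arctan (ρ A) := by
      apply intervalIntegral.integral_eq_sub_of_hasDerivAt
      · intro t ht; rw [hU] at ht
        have := (hρd t ht).arctan
        have h5 : K t = 1 / (1 + ρ t ^ 2) * (r * φ'' t) := by simp only [hK]; ring
        rw [h5]; exact this
      · exact hKi
    rw [this]
    linarith [Real.arctan_lt_pi_div_two (ρ B), Real.neg_pi_div_two_lt_arctan (ρ A)]
  have hE0 : 0 ≤ D * (B - A) := mul_nonneg hD0 (by linarith)
  have b1 : ‖∫ t in A..B, ((g t : ℝ) : ℂ) * e (φ t)‖ ≤ ∫ t in A..B, (D * (B - A) * r) * K t := by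
    apply intervalIntegral.norm_integral_le_of_norm_le hAB
    · refine Filter.Eventually.of_forall fun t ht => ?_
      have ht' : t ∈ Set.Icc A B := Set.Ioc_subset_Icc_self ht
      rw [norm_mul, norm_e, mul_one, Complex.norm_real, Real.norm_eq_abs, abs_mul,
        abs_of_pos (by have := hpos t; positivity : 0 < 1 / (1 + ρ t ^ 2))]
      have h6 : 1 / (1 + ρ t ^ 2) ≤ r * K t := by
        simp only [hK]
        rw [mul_div_assoc']
        apply div_le_div_of_nonneg_right _ (hpos t).le
        have : r * (r * lam) ≤ r * (r * φ'' t) := by gcongr; exact hl t ht'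
        rw [hrl] at this
        have h7 : r * (1 / r) = 1 := by field_simp
        linarith
      calc _ ≤ D * (B - A) * (r * K t) :=
            mul_le_mul (hub t ht') h6 (by have := hpos t; positivity) hE0
        _ = _ := by ring
    · exact hKi.const_mul _
  have b2 : ‖∫ t in A..B, ((v' t : ℝ) : ℂ) * e (φ t)‖ ≤
      ∫ t in A..B, (D * r + (D * (B - A) * r) * K t) := by
    apply intervalIntegral.norm_integral_le_of_norm_le hAB
    · refine Filter.Eventually.of_forall fun t ht => ?_
      have ht' : t ∈ Set.Icc A B := Set.Ioc_subset_Icc_self ht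
      rw [norm_mul, norm_e, mul_one, Complex.norm_real, Real.norm_eq_abs]
      refine (abs_add_le _ _).trans ?_
      have hp := hpos t
      have hφpos : 0 < φ'' t := hlam.trans_le (hl t ht')
      have h8 : |r * (ρ t / (1 + ρ t ^ 2))| ≤ r := by
        rw [abs_mul, abs_of_pos hr0, abs_div, abs_of_pos hp]
        have : |ρ t| / (1 + ρ t ^ 2) ≤ 1 := by
          rw [div_le_one hp]; nlinarith [sq_abs (ρ t), sq_nonneg (|ρ t| - 1), abs_nonneg (ρ t)]
        nlinarith
      have h9 : |r * ((r * φ'' t) * (1 - ρ t ^ 2) / (1 + ρ t ^ 2) ^ 2)| ≤ r * K t := by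
        rw [abs_mul, abs_of_pos hr0]
        gcongr
        simp only [hK]
        rw [abs_div, abs_mul, abs_of_pos (by positivity : 0 < r * φ'' t),
          abs_of_pos (by positivity : 0 < (1 + ρ t ^ 2) ^ 2), div_le_div_iff₀ (by positivity) hp]
        have : |1 - ρ t ^ 2| ≤ 1 + ρ t ^ 2 := by
          rw [abs_le]; constructor <;> nlinarith [sq_nonneg (ρ t)]
        have h10 : 0 < r * φ'' t := by positivity
        calc r * φ'' t * |1 - ρ t ^ 2| * (1 + ρ t ^ 2) ≤
            r * φ'' t * (1 + ρ t ^ 2) * (1 + ρ t ^ 2) := by gcongr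
          _ = _ := by ring
      rw [abs_mul (u' t), abs_mul (u t)]
      have q1 : |u' t| * |r * (ρ t / (1 + ρ t ^ 2))| ≤ D * r :=
        mul_le_mul (hD t ht') h8 (abs_nonneg _) hD0
      have q2 := mul_le_mul (hub t ht') h9 (abs_nonneg _) hE0
      linarith
    · exact intervalIntegrable_const.add (hKi.const_mul _)
  rw [intervalIntegral.integral_const_mul] at b1
  rw [intervalIntegral.integral_add intervalIntegrable_const (hKi.const_mul _),
    intervalIntegral.integral_const, intervalIntegral.integral_const_mul, smul_eq_mul] at b2
  have hn : ‖-(1 / (2 * Real.pi * Complex.I) : ℂ)‖ = 1 / (2 * Real.pi) := by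
    rw [norm_neg, norm_div, norm_mul, norm_mul, Complex.norm_I, Complex.norm_real]
    simp [abs_of_pos Real.pi_pos]
  refine (norm_add_le _ _).trans ?_
  rw [norm_mul, hn]
  have hEr : 0 ≤ D * (B - A) * r := by positivity
  have c1 : ‖∫ t in A..B, ((g t : ℝ) : ℂ) * e (φ t)‖ ≤ D * (B - A) * r * Real.pi :=
    b1.trans (mul_le_mul_of_nonneg_left hKint hEr)
  have c2 : ‖∫ t in A..B, ((v' t : ℝ) : ℂ) * e (φ t)‖ ≤ D * (B - A) * r * (1 + Real.pi) := by
    refine b2.trans ?_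
    have := mul_le_mul_of_nonneg_left hKint hEr
    nlinarith
  have c3 : 1 / (2 * Real.pi) * ‖∫ t in A..B, ((v' t : ℝ) : ℂ) * e (φ t)‖ ≤
      D * (B - A) * r * (7 / 10) := by
    calc _ ≤ 1 / (2 * Real.pi) * (D * (B - A) * r * (1 + Real.pi)) := by gcongr
      _ = D * (B - A) * r * ((1 + Real.pi) / (2 * Real.pi)) := by ring
      _ ≤ _ := by
        refine mul_le_mul_of_nonneg_left ?_ hEr
        rw [div_le_div_iff₀ (by positivity) (by norm_num)]
        nlinarith [Real.pi_gt_three]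
  have c4 : D * (B - A) * r * Real.pi ≤ D * (B - A) * r * (32 / 10) := by
    gcongr; linarith [Real.pi_lt_d2]
  have c5 : 4 * (D * (B - A)) / Real.sqrt lam = 4 * (D * (B - A) * r) := by
    rw [hr]; ring
  rw [c5]; linarith


/-- A `C²` weight with support well inside `[A, B]`, `0 < A`. -/
structure Wt (w w1 w2 : ℝ → ℝ) (A B W : ℝ) : Prop where
  hA : 0 < A
  hAB : A < B
  hd : ∀ t, HasDerivAt w (w1 t) t
  hd1 : ∀ t, HasDerivAt w1 (w2 t) t
  hc2 : Continuous w2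
  b0 : ∀ t, |w t| ≤ W
  b1 : ∀ t, |w1 t| ≤ W
  b2 : ∀ t, |w2 t| ≤ W
  z0 : ∀ t, t ≤ A ∨ B ≤ t → w t = 0
  z1 : ∀ t, t ≤ A ∨ B ≤ t → w1 t = 0
  nn : ∀ t, 0 ≤ w t

lemma exists_Wt (a b : ℝ) (ha : 0 < a) (hab : a < b) :
    ∃ (w w1 w2 : ℝ → ℝ) (A B W : ℝ), Wt w w1 w2 A B W ∧ ∀ t ∈ Set.Icc a b, w t = 1 := by
  let f : ContDiffBump ((a + b) / 2) :=
    { rIn := (b - a) / 2, rOut := b / 2, rIn_pos := by linarith, rIn_lt_rOut := by linarith }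
  have hcd : ContDiff ℝ 2 f := f.contDiff
  have hcd1 : ContDiff ℝ 1 (deriv f) := by
    have : ContDiff ℝ (1 + 1) f := by norm_num; exact hcd
    exact (contDiff_succ_iff_deriv.1 this).2.2
  have hcd2 : ContDiff ℝ 0 (deriv (deriv f)) := by
    have : ContDiff ℝ (0 + 1) (deriv f) := by norm_num; exact hcd1
    exact (contDiff_succ_iff_deriv.1 this).2.2
  have hs : HasCompactSupport f := f.hasCompactSupport
  obtain ⟨C0, h0⟩ := hs.exists_bound_of_continuous hcd.continuous
  obtain ⟨C1, h1⟩ := hs.deriv.exists_bound_of_continuous hcd1.continuous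
  obtain ⟨C2, h2⟩ := hs.deriv.deriv.exists_bound_of_continuous hcd2.continuous
  have hz : ∀ t, t ≤ a / 4 ∨ a + 2 * b ≤ t → t ∉ tsupport f := by
    intro t ht hmem
    rw [f.tsupport_eq, Metric.mem_closedBall, Real.dist_eq, abs_le] at hmem
    change -(b / 2) ≤ _ ∧ _ ≤ b / 2 at hmem
    rcases ht with ht | ht
    · linarith [hmem.1]
    · linarith [hmem.2]
  refine ⟨f, deriv f, deriv (deriv f), a / 4, a + 2 * b, max C0 (max C1 C2), ?_, ?_⟩
  · refine ⟨by linarith, by linarith, ?_, ?_, hcd2.continuous, ?_, ?_, ?_, ?_, ?_, ?_⟩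
    · intro t; exact (hcd.differentiable (by norm_num) t).hasDerivAt
    · intro t; exact (hcd1.differentiable (by norm_num) t).hasDerivAt
    · intro t; exact (h0 t).trans (le_max_left _ _)
    · intro t; exact (h1 t).trans ((le_max_left _ _).trans (le_max_right _ _))
    · intro t; exact (h2 t).trans ((le_max_right _ _).trans (le_max_right _ _))
    · intro t ht; exact image_eq_zero_of_notMem_tsupport (hz t ht)
    · intro t ht
      exact Function.notMem_support.1 fun h => hz t ht (support_deriv_subset h)
    · intro t; exact f.nonneg
  · intro t ht
    apply f.one_of_mem_closedBall
    rw [Metric.mem_closedBall, Real.dist_eq, abs_le]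
    change -((b - a) / 2) ≤ _ ∧ _ ≤ (b - a) / 2
    constructor <;> linarith [ht.1, ht.2]

/-- powers are bounded on compact subintervals of the positive axis -/
lemma rpow_bdd (q A B : ℝ) (hA : 0 < A) :
    ∃ C > 0, ∀ t ∈ Set.Icc A B, t ^ q ≤ C := by
  have hc : ContinuousOn (fun t : ℝ => t ^ q) (Set.Icc A B) := by
    intro t ht
    exact (Real.continuousAt_rpow_const t q (Or.inl (hA.trans_le ht.1).ne')).continuousWithinAt
  obtain ⟨C, hC⟩ := isCompact_Icc.exists_bound_of_continuousOn hc
  refine ⟨max C 1, by positivity, fun t ht => ?_⟩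
  exact (le_abs_self _).trans ((hC t ht).trans (le_max_left _ _))

lemma rpow_bdd_below (q A B : ℝ) (hA : 0 < A) :
    ∃ c > 0, ∀ t ∈ Set.Icc A B, c ≤ t ^ q := by
  obtain ⟨C, hC, h⟩ := rpow_bdd (-q) A B hA
  refine ⟨C⁻¹, by positivity, fun t ht => ?_⟩
  have := h t ht
  rw [Real.rpow_neg (hA.trans_le ht.1).le] at this
  have h2 : 0 < t ^ q := Real.rpow_pos_of_pos (hA.trans_le ht.1) q
  exact inv_le_of_inv_le₀ h2 this

lemma nonstat {w w1 w2 : ℝ → ℝ} {A B W : ℝ} (hw : Wt w w1 w2 A B W) (k c : ℝ)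
    (hk : 1 < k) (hc : 0 < c) :
    ∃ C > 0, ∀ X > 0, ∀ ν : ℝ,
      (∀ t ∈ Set.Icc A B, c * (X + |ν|) ≤ |k * X * t ^ (k - 1) - ν|) →
      ‖∫ t in A..B, (w t : ℂ) * e (X * t ^ k - ν * t)‖ ≤ C / (X + |ν|) ^ 2 := by
  obtain ⟨C2, hC2, h2⟩ := rpow_bdd (k - 2) A B hw.hA
  obtain ⟨C3, hC3, h3⟩ := rpow_bdd (k - 3) A B hw.hA
  set E2 := k * (k - 1) * C2 with hE2
  set E3 := k * (k - 1) * |k - 2| * C3 with hE3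
  have hk1 : 0 < k - 1 := by linarith
  have hk0 : 0 < k := by linarith
  have hE2p : 0 < E2 := by positivity
  have hE3p : 0 ≤ E3 := by positivity
  have hW : 0 ≤ W := (abs_nonneg _).trans (hw.b0 0)
  have hAB := hw.hAB
  refine ⟨W * (1 / c ^ 2 + 3 * E2 / c ^ 3 + E3 / c ^ 3 + 3 * E2 ^ 2 / c ^ 4) * (B - A) + 1,
    by have : 0 < B - A := by linarith
       positivity, ?_⟩
  intro X hX ν hν
  set Z := X + |ν| with hZ
  have hZp : 0 < Z := by have := abs_nonneg ν; linarith
  have hXZ : X ≤ Z := by have := abs_nonneg ν; linarith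
  set φ : ℝ → ℝ := fun t => X * t ^ k - ν * t with hφ
  set φ1 : ℝ → ℝ := fun t => k * X * t ^ (k - 1) - ν with hφ1
  set φ2 : ℝ → ℝ := fun t => k * (k - 1) * X * t ^ (k - 2) with hφ2
  set φ3 : ℝ → ℝ := fun t => k * (k - 1) * (k - 2) * X * t ^ (k - 3) with hφ3
  have tpos : ∀ t ∈ Set.Icc A B, 0 < t := fun t ht => hw.hA.trans_le ht.1
  have d0 : ∀ t ∈ Set.Icc A B, HasDerivAt φ (φ1 t) t := by
    intro t ht
    have := ((Real.hasDerivAt_rpow_const (p := k) (Or.inl (tpos t ht).ne')).const_mul X).sub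
      ((hasDerivAt_id t).const_mul ν)
    refine HasDerivAt.congr_deriv (f := φ) this ?_
    simp only [hφ1]; ring
  have d1 : ∀ t ∈ Set.Icc A B, HasDerivAt φ1 (φ2 t) t := by
    intro t ht
    have := ((Real.hasDerivAt_rpow_const (p := k - 1)
      (Or.inl (tpos t ht).ne')).const_mul (k * X)).sub_const ν
    refine HasDerivAt.congr_deriv (f := φ1) this ?_
    simp only [hφ2]; rw [show k - 1 - 1 = k - 2 by ring]; ring
  have d2 : ∀ t ∈ Set.Icc A B, HasDerivAt φ2 (φ3 t) t := by
    intro t ht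
    have := ((Real.hasDerivAt_rpow_const (p := k - 2)
      (Or.inl (tpos t ht).ne')).const_mul (k * (k - 1) * X))
    refine HasDerivAt.congr_deriv (f := φ2) this ?_
    simp only [hφ3]; rw [show k - 2 - 1 = k - 3 by ring]; ring
  have hne : ∀ t ∈ Set.Icc A B, φ1 t ≠ 0 := by
    intro t ht h0
    have := hν t ht
    change _ ≤ |φ1 t| at this
    rw [h0, abs_zero] at this
    have : 0 < c * Z := by positivity
    linarith
  have cφ1 : ContinuousOn φ1 (Set.Icc A B) := fun t ht => (d1 t ht).continuousAt.continuousWithinAt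
  have cφ2 : ContinuousOn φ2 (Set.Icc A B) := fun t ht => (d2 t ht).continuousAt.continuousWithinAt
  have cφ3 : ContinuousOn φ3 (Set.Icc A B) := by
    intro t ht
    exact ((Real.continuousAt_rpow_const t (k - 3)
      (Or.inl (tpos t ht).ne')).const_mul _).continuousWithinAt
  have cw : Continuous w := continuous_iff_continuousAt.2 fun t => (hw.hd t).continuousAt
  have cw1 : Continuous w1 := continuous_iff_continuousAt.2 fun t => (hw.hd1 t).continuousAt
  set ψ : ℝ → ℝ := fun t => (φ1 t)⁻¹ with hψ
  have dψ : ∀ t ∈ Set.Icc A B, HasDerivAt ψ (-(φ2 t) * ψ t ^ 2) t := by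
    intro t ht
    have := (d1 t ht).inv (hne t ht)
    refine HasDerivAt.congr_deriv (f := ψ) this ?_
    simp only [hψ]; field_simp
  have cψ : ContinuousOn ψ (Set.Icc A B) := fun t ht => (dψ t ht).continuousAt.continuousWithinAt
  set u1 : ℝ → ℝ := fun t => w1 t * ψ t - w t * φ2 t * ψ t ^ 2 with hu1
  set u2 : ℝ → ℝ := fun t => w2 t * ψ t ^ 2 - 3 * w1 t * φ2 t * ψ t ^ 3 - w t * φ3 t * ψ t ^ 3
    + 3 * w t * φ2 t ^ 2 * ψ t ^ 4 with hu2
  have dv1 : ∀ t ∈ Set.Icc A B, HasDerivAt (fun t => w t * ψ t) (u1 t) t := by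
    intro t ht
    have := (hw.hd t).mul (dψ t ht)
    refine HasDerivAt.congr_deriv (f := fun t => w t * ψ t) this ?_
    simp only [hu1]; ring
  have dv2 : ∀ t ∈ Set.Icc A B, HasDerivAt (fun t => u1 t * ψ t) (u2 t) t := by
    intro t ht
    have e1 := ((hw.hd1 t).mul (dψ t ht)).sub
      (((hw.hd t).mul (d2 t ht)).mul ((dψ t ht).pow 2))
    have := e1.mul (dψ t ht)
    refine HasDerivAt.congr_deriv (f := fun t => u1 t * ψ t) this ?_
    simp only [hu2, Pi.mul_apply, Pi.sub_apply, Pi.pow_apply]; ring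
  have cu1 : ContinuousOn u1 (Set.Icc A B) :=
    (cw1.continuousOn.mul cψ).sub ((cw.continuousOn.mul cφ2).mul (cψ.pow 2))
  have cu2 : ContinuousOn u2 (Set.Icc A B) :=
    (((hw.hc2.continuousOn.mul (cψ.pow 2)).sub (((continuousOn_const.mul cw1.continuousOn).mul
      cφ2).mul (cψ.pow 3))).sub ((cw.continuousOn.mul cφ3).mul (cψ.pow 3))).add
      (((continuousOn_const.mul cw.continuousOn).mul (cφ2.pow 2)).mul (cψ.pow 4))
  have zA := hw.z0 A (Or.inl le_rfl)
  have zB := hw.z0 B (Or.inr le_rfl)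
  have zA1 := hw.z1 A (Or.inl le_rfl)
  have zB1 := hw.z1 B (Or.inr le_rfl)
  have p1 := ibp_e hAB.le dv1 d0 cu1 cφ1 (by simp [zA]) (by simp [zB])
  have p2 := ibp_e hAB.le dv2 d0 cu2 cφ1 (by simp [hu1, zA, zA1]) (by simp [hu1, zB, zB1])
  have hU : Set.uIcc A B = Set.Icc A B := Set.uIcc_of_le hAB.le
  have q1 : ∫ t in A..B, (w t : ℂ) * e (φ t) =
      ∫ t in A..B, ((w t * ψ t * φ1 t : ℝ) : ℂ) * e (φ t) := by
    refine intervalIntegral.integral_congr fun t ht => ?_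
    rw [hU] at ht
    have : w t * ψ t * φ1 t = w t := by
      simp only [hψ]; rw [mul_assoc, inv_mul_cancel₀ (hne t ht), mul_one]
    simp only [this]
  have q2 : ∫ t in A..B, (u1 t : ℂ) * e (φ t) =
      ∫ t in A..B, ((u1 t * ψ t * φ1 t : ℝ) : ℂ) * e (φ t) := by
    refine intervalIntegral.integral_congr fun t ht => ?_
    rw [hU] at ht
    have : u1 t * ψ t * φ1 t = u1 t := by
      simp only [hψ]; rw [mul_assoc, inv_mul_cancel₀ (hne t ht), mul_one]
    simp only [this]
  change ‖∫ t in A..B, (w t : ℂ) * e (φ t)‖ ≤ _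
  rw [q1, p1, q2, p2, norm_mul, norm_mul]
  have hn : ‖-(1 / (2 * Real.pi * Complex.I) : ℂ)‖ ≤ 1 := by
    rw [norm_neg, norm_div, norm_mul, norm_mul, Complex.norm_I, Complex.norm_real]
    simp only [norm_one, Complex.norm_ofNat, mul_one, Real.norm_eq_abs, abs_of_pos Real.pi_pos]
    rw [div_le_one (by positivity)]; linarith [Real.pi_gt_three]
  have hbound : ∀ t ∈ Set.Icc A B, |u2 t| ≤
      W * (1 / c ^ 2 + 3 * E2 / c ^ 3 + E3 / c ^ 3 + 3 * E2 ^ 2 / c ^ 4) / Z ^ 2 := by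
    intro t ht
    have hψb : |ψ t| ≤ 1 / (c * Z) := by
      simp only [hψ]; rw [abs_inv, one_div]
      exact inv_anti₀ (by positivity) (hν t ht)
    have hφ2b : |φ2 t| ≤ E2 * Z := by
      have tp := Real.rpow_pos_of_pos (tpos t ht) (k - 2)
      simp only [hφ2, hE2]
      rw [abs_of_pos (by positivity)]
      have := h2 t ht
      calc k * (k - 1) * X * t ^ (k - 2) ≤ k * (k - 1) * Z * C2 := by gcongr
        _ = _ := by ring
    have hφ3b : |φ3 t| ≤ E3 * Z := by
      have tp := Real.rpow_pos_of_pos (tpos t ht) (k - 3)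
      simp only [hφ3, hE3]
      rw [abs_mul, abs_mul, abs_mul, abs_of_pos tp, abs_of_pos hX,
        abs_of_pos (by positivity : 0 < k * (k - 1))]
      have := h3 t ht
      calc k * (k - 1) * |k - 2| * X * t ^ (k - 3) ≤ k * (k - 1) * |k - 2| * Z * C3 := by gcongr
        _ = _ := by ring
    have t1 : |w2 t * ψ t ^ 2| ≤ W * (1 / (c * Z)) ^ 2 := by
      rw [abs_mul, abs_pow]; have := hw.b2 t; gcongr
    have t2 : |3 * w1 t * φ2 t * ψ t ^ 3| ≤ 3 * W * (E2 * Z) * (1 / (c * Z)) ^ 3 := by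
      rw [abs_mul, abs_pow, abs_mul, abs_mul, abs_of_pos (by norm_num : (0:ℝ) < 3)]
      have := hw.b1 t; gcongr
    have t3 : |w t * φ3 t * ψ t ^ 3| ≤ W * (E3 * Z) * (1 / (c * Z)) ^ 3 := by
      rw [abs_mul, abs_pow, abs_mul]
      have := hw.b0 t; gcongr
    have t4 : |3 * w t * φ2 t ^ 2 * ψ t ^ 4| ≤ 3 * W * (E2 * Z) ^ 2 * (1 / (c * Z)) ^ 4 := by
      rw [abs_mul, abs_pow, abs_mul, abs_pow, abs_mul, abs_of_pos (by norm_num : (0:ℝ) < 3)]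
      have := hw.b0 t; gcongr
    have tot : |u2 t| ≤ |w2 t * ψ t ^ 2| + |3 * w1 t * φ2 t * ψ t ^ 3| + |w t * φ3 t * ψ t ^ 3|
        + |3 * w t * φ2 t ^ 2 * ψ t ^ 4| := by
      simp only [hu2]
      refine (abs_add_le _ _).trans (add_le_add ?_ le_rfl)
      refine (abs_sub _ _).trans (add_le_add ?_ le_rfl)
      exact abs_sub _ _
    calc |u2 t| ≤ W * (1 / (c * Z)) ^ 2 + 3 * W * (E2 * Z) * (1 / (c * Z)) ^ 3 +
          W * (E3 * Z) * (1 / (c * Z)) ^ 3 + 3 * W * (E2 * Z) ^ 2 * (1 / (c * Z)) ^ 4 := by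
          linarith
      _ = _ := by field_simp
  have hI : ‖∫ t in A..B, (u2 t : ℂ) * e (φ t)‖ ≤
      W * (1 / c ^ 2 + 3 * E2 / c ^ 3 + E3 / c ^ 3 + 3 * E2 ^ 2 / c ^ 4) / Z ^ 2 * |B - A| := by
    apply intervalIntegral.norm_integral_le_of_norm_le_const
    intro t ht
    rw [Set.uIoc_of_le hAB.le] at ht
    rw [norm_mul, norm_e, mul_one, Complex.norm_real]
    exact hbound t (Set.Ioc_subset_Icc_self ht)
  rw [abs_of_pos (by linarith)] at hI
  have hN := norm_nonneg (∫ t in A..B, (u2 t : ℂ) * e (φ t))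
  have hN1 := norm_nonneg (-(1 / (2 * Real.pi * Complex.I) : ℂ))
  calc _ ≤ 1 * (1 * ‖∫ t in A..B, (u2 t : ℂ) * e (φ t)‖) := by gcongr
    _ ≤ _ := by
      rw [one_mul, one_mul]
      refine hI.trans ?_
      rw [div_mul_eq_mul_div]
      gcongr
      linarith


lemma exists_Q (r : ℝ) (hr : 0 < r) :
    ∃ Q Q1 Q2 : ℝ → ℝ, (∀ s > 0, HasDerivAt Q (Q1 s) s) ∧ (∀ s > 0, HasDerivAt Q1 (Q2 s) s) ∧
      ContinuousOn Q2 (Set.Ioi 0) ∧ ∀ s > 0, Q s * (s ^ r - 1) = s - 1 := by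
  set f : ℝ → ℝ := fun s => s ^ r with hf
  have hfa : ∀ s > 0, AnalyticAt ℝ f s := fun s hs =>
    (Real.contDiffAt_rpow_const_of_ne hs.ne').analyticAt
  set q := dslope f 1 with hq
  have hqa : ∀ s > 0, AnalyticAt ℝ q s := by
    intro s hs
    rcases eq_or_ne s 1 with rfl | hne
    · obtain ⟨p, hp⟩ := hfa 1 one_pos
      exact ⟨_, hp.has_fpower_series_dslope_fslope⟩
    · have h1 : AnalyticAt ℝ (fun x => (x - 1)⁻¹ * (f x - f 1)) s :=
        ((analyticAt_id.sub analyticAt_const).inv (sub_ne_zero.2 hne)).mul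
          ((hfa s hs).sub analyticAt_const)
      refine h1.congr ?_
      filter_upwards [isOpen_ne.mem_nhds hne] with x hx
      rw [hq, dslope_of_ne _ hx, slope_def_field]
      field_simp
  have hqn : ∀ s > 0, q s ≠ 0 := by
    intro s hs
    rcases eq_or_ne s 1 with rfl | hne
    · rw [hq, dslope_same]
      have : HasDerivAt f (r * 1 ^ (r - 1)) 1 :=
        Real.hasDerivAt_rpow_const (Or.inl one_ne_zero)
      rw [this.deriv]; simp [hr.ne']
    · rw [hq, dslope_of_ne _ hne, slope_def_field]
      refine div_ne_zero ?_ (sub_ne_zero.2 hne)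
      simp only [hf, Real.one_rpow]
      intro h
      have h2 : s ^ r = 1 := by linarith
      apply hne
      have h3 := congrArg (fun x => x ^ (r⁻¹)) h2
      simp only [Real.one_rpow] at h3
      rwa [← Real.rpow_mul hs.le, mul_inv_cancel₀ hr.ne', Real.rpow_one] at h3
  have hQa : ∀ s > 0, AnalyticAt ℝ (fun s => (q s)⁻¹) s := fun s hs => (hqa s hs).inv (hqn s hs)
  refine ⟨fun s => (q s)⁻¹, deriv (fun s => (q s)⁻¹), deriv (deriv fun s => (q s)⁻¹), ?_, ?_, ?_, ?_⟩
  · intro s hs; exact (hQa s hs).differentiableAt.hasDerivAt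
  · intro s hs; exact (hQa s hs).deriv.differentiableAt.hasDerivAt
  · intro s hs; exact (hQa s hs).deriv.deriv.continuousAt.continuousWithinAt
  · intro s hs
    have h1 : (s - 1) * q s = s ^ r - 1 := by
      have := sub_smul_dslope f 1 s
      simpa [hf] using this
    rw [← h1]
    have := hqn s hs
    field_simp

/-- phase with stationary point `σ` -/
noncomputable def phs (k X σ t : ℝ) : ℝ := X * (t ^ k - k * σ ^ (k - 1) * t + (k - 1) * σ ^ k)

/-- amplitude -/
noncomputable def amp (w : ℝ → ℝ) (A B k X σ : ℝ) : ℂ :=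
  ∫ t in A..B, (w t : ℂ) * e (phs k X σ t)

lemma phs_d {k X σ t : ℝ} (ht : 0 < t) :
    HasDerivAt (phs k X σ) (k * X * (t ^ (k - 1) - σ ^ (k - 1))) t := by
  have := ((((Real.hasDerivAt_rpow_const (p := k) (Or.inl ht.ne')).sub
      ((hasDerivAt_id t).const_mul (k * σ ^ (k - 1)))).add_const ((k - 1) * σ ^ k))).const_mul X
  refine HasDerivAt.congr_deriv (f := phs k X σ) this ?_
  ring

lemma phs_dd {k X σ t : ℝ} (ht : 0 < t) :
    HasDerivAt (fun t => k * X * (t ^ (k - 1) - σ ^ (k - 1))) (k * (k - 1) * X * t ^ (k - 2)) t := by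
  have := ((Real.hasDerivAt_rpow_const (p := k - 1) (Or.inl ht.ne')).sub_const
    (σ ^ (k - 1))).const_mul (k * X)
  refine this.congr_deriv ?_
  rw [show k - 1 - 1 = k - 2 by ring]; ring

lemma phs_dσ {k X σ t : ℝ} (hσ : 0 < σ) :
    HasDerivAt (fun σ => phs k X σ t) (k * (k - 1) * X * σ ^ (k - 2) * (σ - t)) σ := by
  have := ((((Real.hasDerivAt_rpow_const (p := k - 1) (Or.inl hσ.ne')).const_mul k).mul_const
    t).const_sub (t ^ k)).add ((Real.hasDerivAt_rpow_const (p := k) (Or.inl hσ.ne')).const_mul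
      (k - 1)) |>.const_mul X
  refine HasDerivAt.congr_deriv (f := fun σ => phs k X σ t) this ?_
  rw [show k - 1 - 1 = k - 2 by ring]
  have : σ ^ (k - 1) = σ ^ (k - 2) * σ := by
    rw [← Real.rpow_add_one hσ.ne']; congr 1; ring
  rw [this]; ring

lemma amp_bound {w w1 w2 : ℝ → ℝ} {A B W : ℝ} (hw : Wt w w1 w2 A B W) (k : ℝ) (hk : 1 < k) :
    ∃ C > 0, ∀ X > 0, ∀ σ : ℝ, ‖amp w A B k X σ‖ ≤ C / √X := by
  obtain ⟨c, hc, h⟩ := rpow_bdd_below (k - 2) A B hw.hA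
  have hk1 : 0 < k - 1 := by linarith
  have hW : 0 ≤ W := (abs_nonneg _).trans (hw.b0 0)
  have hAB := hw.hAB
  set lam := k * (k - 1) * c with hlam
  have hl : 0 < lam := by positivity
  refine ⟨4 * (W * (B - A)) / √lam + 1, by have : 0 < B - A := by linarith
                                           positivity, ?_⟩
  intro X hX σ
  have tpos : ∀ t ∈ Set.Icc A B, 0 < t := fun t ht => hw.hA.trans_le ht.1
  have cw1 : Continuous w1 := continuous_iff_continuousAt.2 fun t => (hw.hd1 t).continuousAt
  have := vdc2 hAB.le (lam := lam * X) (by positivity) (fun t _ => hw.hd t)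
    (fun t ht => phs_d (k := k) (X := X) (σ := σ) (tpos t ht)) (fun t ht => phs_dd (tpos t ht))
    cw1.continuousOn (fun t ht => ((Real.continuousAt_rpow_const t (k - 2)
      (Or.inl (tpos t ht).ne')).const_mul _).continuousWithinAt)
    (hw.z0 A (Or.inl le_rfl)) (hw.z0 B (Or.inr le_rfl)) (fun t _ => hw.b1 t)
    (fun t ht => by
      have := h t ht
      rw [hlam]
      calc k * (k - 1) * c * X = k * (k - 1) * X * c := by ring
        _ ≤ _ := by gcongr)
  refine this.trans ?_
  rw [Real.sqrt_mul hl.le, ← div_div]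
  gcongr
  linarith

lemma amp_mom {w w1 w2 : ℝ → ℝ} {A B W : ℝ} (hw : Wt w w1 w2 A B W) (k : ℝ) (hk : 1 < k)
    (a b : ℝ) (ha : 0 < a) :
    ∃ C > 0, ∀ X > 0, ∀ σ ∈ Set.Icc a b,
      ‖∫ t in A..B, ((w t * (t - σ) : ℝ) : ℂ) * e (phs k X σ t)‖ ≤ C / (X * √X) := by
  obtain ⟨c, hc, h⟩ := rpow_bdd_below (k - 2) A B hw.hA
  obtain ⟨c', hc', h'⟩ := rpow_bdd_below (k - 2) a b ha
  obtain ⟨Q, Q1, Q2, dQ, dQ1, cQ2, hQ⟩ := exists_Q (k - 1) (by linarith)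
  have hk1 : 0 < k - 1 := by linarith
  have hk0 : 0 < k := by linarith
  have hW : 0 ≤ W := (abs_nonneg _).trans (hw.b0 0)
  have hAB := hw.hAB
  have hA := hw.hA
  have hBA : 0 < B - A := by linarith
  by_cases hab : a ≤ b
  swap
  · refine ⟨1, one_pos, fun X _ σ hσ => ?_⟩
    exact absurd (hσ.1.trans hσ.2) hab
  have hb : 0 < b := ha.trans_le hab
  have hsub : Set.Icc (A / b) (B / a) ⊆ Set.Ioi 0 := fun s hs =>
    lt_of_lt_of_le (div_pos hA hb) hs.1
  obtain ⟨M0, hM0⟩ := isCompact_Icc.exists_bound_of_continuousOn (s := Set.Icc (A / b) (B / a))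
    (f := Q) (fun s hs => (dQ s (hsub hs)).continuousAt.continuousWithinAt)
  obtain ⟨M1, hM1⟩ := isCompact_Icc.exists_bound_of_continuousOn (s := Set.Icc (A / b) (B / a))
    (f := Q1) (fun s hs => (dQ1 s (hsub hs)).continuousAt.continuousWithinAt)
  obtain ⟨M2, hM2⟩ := isCompact_Icc.exists_bound_of_continuousOn (s := Set.Icc (A / b) (B / a))
    (f := Q2) (cQ2.mono hsub)
  set D := W * |M0| + 2 * W * |M1| / a + W * |M2| / a ^ 2 with hD
  have hD0 : 0 ≤ D := by positivity
  set lam := k * (k - 1) * c with hlam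
  have hl : 0 < lam := by positivity
  refine ⟨1 / (k * c') * (4 * (D * (B - A)) / √lam) + 1, by positivity, ?_⟩
  intro X hX σ hσ
  have hσ0 : 0 < σ := ha.trans_le hσ.1
  have tpos : ∀ t ∈ Set.Icc A B, 0 < t := fun t ht => hw.hA.trans_le ht.1
  have hmem : ∀ t ∈ Set.Icc A B, t / σ ∈ Set.Icc (A / b) (B / a) := by
    intro t ht
    have := tpos t ht
    constructor
    · exact div_le_div₀ (tpos t ht).le ht.1 hσ0 hσ.2
    · exact div_le_div₀ (by linarith) ht.2 ha hσ.1
  have cw : Continuous w := continuous_iff_continuousAt.2 fun t => (hw.hd t).continuousAt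
  have cw1 : Continuous w1 := continuous_iff_continuousAt.2 fun t => (hw.hd1 t).continuousAt
  have ddiv : ∀ t, HasDerivAt (fun t => t / σ) (1 / σ) t := fun t => (hasDerivAt_id t).div_const σ
  have dq : ∀ t ∈ Set.Icc A B, HasDerivAt (fun t => Q (t / σ)) (Q1 (t / σ) * (1 / σ)) t :=
    fun t ht => HasDerivAt.comp t (dQ _ (hsub (hmem t ht))) (ddiv t)
  have dq1 : ∀ t ∈ Set.Icc A B, HasDerivAt (fun t => Q1 (t / σ)) (Q2 (t / σ) * (1 / σ)) t :=
    fun t ht => HasDerivAt.comp t (dQ1 _ (hsub (hmem t ht))) (ddiv t)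
  set v : ℝ → ℝ := fun t => w t * Q (t / σ) with hv
  set v1 : ℝ → ℝ := fun t => w1 t * Q (t / σ) + w t * (Q1 (t / σ) * (1 / σ)) with hv1
  set v2 : ℝ → ℝ := fun t => w2 t * Q (t / σ) + w1 t * (Q1 (t / σ) * (1 / σ)) +
    (w1 t * (Q1 (t / σ) * (1 / σ)) + w t * (Q2 (t / σ) * (1 / σ) * (1 / σ))) with hv2
  have dv : ∀ t ∈ Set.Icc A B, HasDerivAt v (v1 t) t := fun t ht => (hw.hd t).mul (dq t ht)
  have dv1 : ∀ t ∈ Set.Icc A B, HasDerivAt v1 (v2 t) t := fun t ht =>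
    ((hw.hd1 t).mul (dq t ht)).add ((hw.hd t).mul ((dq1 t ht).mul_const (1 / σ)))
  have cdiv : ContinuousOn (fun t : ℝ => t / σ) (Set.Icc A B) := (continuous_id.div_const σ).continuousOn
  have cq : ContinuousOn (fun t => Q (t / σ)) (Set.Icc A B) :=
    fun t ht => (dq t ht).continuousAt.continuousWithinAt
  have cq1 : ContinuousOn (fun t => Q1 (t / σ)) (Set.Icc A B) :=
    fun t ht => (dq1 t ht).continuousAt.continuousWithinAt
  have cq2 : ContinuousOn (fun t => Q2 (t / σ)) (Set.Icc A B) :=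
    cQ2.comp cdiv (fun t ht => hsub (hmem t ht))
  have cv2 : ContinuousOn v2 (Set.Icc A B) := by
    have h1 := hw.hc2.continuousOn (s := Set.Icc A B)
    have h2 := cw.continuousOn (s := Set.Icc A B)
    have h3 := cw1.continuousOn (s := Set.Icc A B)
    exact ((h1.mul cq).add (h3.mul (cq1.mul continuousOn_const))).add
      ((h3.mul (cq1.mul continuousOn_const)).add
        (h2.mul ((cq2.mul continuousOn_const).mul continuousOn_const)))
  have cv1 : ContinuousOn v1 (Set.Icc A B) := fun t ht => (dv1 t ht).continuousAt.continuousWithinAt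
  have zA := hw.z0 A (Or.inl le_rfl)
  have zB := hw.z0 B (Or.inr le_rfl)
  have zA1 := hw.z1 A (Or.inl le_rfl)
  have zB1 := hw.z1 B (Or.inr le_rfl)
  have p1 := ibp_e hAB.le dv (fun t ht => phs_d (k := k) (X := X) (σ := σ) (tpos t ht)) cv1
    (fun t ht => (phs_dd (tpos t ht)).continuousAt.continuousWithinAt)
    (by simp [hv, zA]) (by simp [hv, zB])
  have p2 := vdc2 hAB.le (lam := lam * X) (D := D) (by positivity) dv1
    (fun t ht => phs_d (k := k) (X := X) (σ := σ) (tpos t ht)) (fun t ht => phs_dd (tpos t ht))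
    cv2 (fun t ht => ((Real.continuousAt_rpow_const t (k - 2)
      (Or.inl (tpos t ht).ne')).const_mul _).continuousWithinAt)
    (by simp [hv1, zA, zA1]) (by simp [hv1, zB, zB1])
    (fun t ht => by
      have m0 := (hM0 _ (hmem t ht)).trans (le_abs_self _)
      have m1 := (hM1 _ (hmem t ht)).trans (le_abs_self _)
      have m2 := (hM2 _ (hmem t ht)).trans (le_abs_self _)
      rw [Real.norm_eq_abs] at m0 m1 m2
      have hs : |1 / σ| ≤ 1 / a := by
        rw [abs_of_pos (by positivity)]; exact one_div_le_one_div_of_le ha hσ.1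
      have t1 : |w2 t * Q (t / σ)| ≤ W * |M0| := by
        rw [abs_mul]; have := hw.b2 t; gcongr
      have t2 : |w1 t * (Q1 (t / σ) * (1 / σ))| ≤ W * (|M1| * (1 / a)) := by
        rw [abs_mul, abs_mul]; have := hw.b1 t; gcongr
      have t3 : |w t * (Q2 (t / σ) * (1 / σ) * (1 / σ))| ≤ W * (|M2| * (1 / a) * (1 / a)) := by
        rw [abs_mul, abs_mul, abs_mul]; have := hw.b0 t; gcongr
      have := abs_add_le (w2 t * Q (t / σ) + w1 t * (Q1 (t / σ) * (1 / σ)))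
        (w1 t * (Q1 (t / σ) * (1 / σ)) + w t * (Q2 (t / σ) * (1 / σ) * (1 / σ)))
      have u1 := abs_add_le (w2 t * Q (t / σ)) (w1 t * (Q1 (t / σ) * (1 / σ)))
      have u2 := abs_add_le (w1 t * (Q1 (t / σ) * (1 / σ)))
        (w t * (Q2 (t / σ) * (1 / σ) * (1 / σ)))
      have hDe : D = W * |M0| + W * (|M1| * (1 / a)) + (W * (|M1| * (1 / a)) +
          W * (|M2| * (1 / a) * (1 / a))) := by rw [hD]; field_simp; ring
      rw [hDe]
      simp only [hv2]
      linarith)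
    (fun t ht => by
      have := h t ht
      rw [hlam]
      calc k * (k - 1) * c * X = k * (k - 1) * X * c := by ring
        _ ≤ _ := by gcongr)
  have hσp : 0 < σ ^ (k - 2) := Real.rpow_pos_of_pos hσ0 _
  set g : ℝ := k * X * σ ^ (k - 2) with hg
  have hgp : 0 < g := by positivity
  have key : (g : ℂ) * ∫ t in A..B, ((w t * (t - σ) : ℝ) : ℂ) * e (phs k X σ t) =
      ∫ t in A..B, ((v t * (k * X * (t ^ (k - 1) - σ ^ (k - 1))) : ℝ) : ℂ) * e (phs k X σ t) := by
    rw [← intervalIntegral.integral_const_mul]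
    refine intervalIntegral.integral_congr fun t ht => ?_
    rw [Set.uIcc_of_le hAB.le] at ht
    have h1 := hQ (t / σ) (hsub (hmem t ht))
    have h2 : t ^ (k - 1) - σ ^ (k - 1) = σ ^ (k - 1) * ((t / σ) ^ (k - 1) - 1) := by
      rw [Real.div_rpow (tpos t ht).le hσ0.le]
      have := Real.rpow_pos_of_pos hσ0 (k - 1)
      field_simp
    have h3 : σ ^ (k - 1) = σ ^ (k - 2) * σ := by
      rw [← Real.rpow_add_one hσ0.ne']; congr 1; ring
    have h4 : v t * (k * X * (t ^ (k - 1) - σ ^ (k - 1))) = g * (w t * (t - σ)) := by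
      rw [h2]
      calc v t * (k * X * (σ ^ (k - 1) * ((t / σ) ^ (k - 1) - 1)))
          = w t * k * X * σ ^ (k - 1) * (Q (t / σ) * ((t / σ) ^ (k - 1) - 1)) := by
            simp only [hv]; ring
        _ = g * (w t * (t - σ)) := by
            rw [h1, h3, hg]
            field_simp
    simp only [h4]
    push_cast; ring
  have hn : ‖-(1 / (2 * Real.pi * Complex.I) : ℂ)‖ ≤ 1 := by
    rw [norm_neg, norm_div, norm_mul, norm_mul, Complex.norm_I, Complex.norm_real]
    simp only [norm_one, Complex.norm_ofNat, mul_one, Real.norm_eq_abs, abs_of_pos Real.pi_pos]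
    rw [div_le_one (by positivity)]; linarith [Real.pi_gt_three]
  rw [p1] at key
  have hkey := congrArg norm key
  rw [norm_mul, norm_mul, Complex.norm_real, Real.norm_eq_abs, abs_of_pos hgp] at hkey
  set J := ‖∫ t in A..B, ((w t * (t - σ) : ℝ) : ℂ) * e (phs k X σ t)‖
  set J2 := ‖∫ t in A..B, ((v1 t : ℝ) : ℂ) * e (phs k X σ t)‖
  have hJ2 : g * J ≤ J2 := by
    rw [hkey]
    exact (mul_le_mul_of_nonneg_right hn (norm_nonneg _)).trans (one_mul _).le
  have hg2 : k * c' * X ≤ g := by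
    have := h' σ hσ
    calc k * c' * X = k * X * c' := by ring
      _ ≤ _ := by rw [hg]; gcongr
  rw [Real.sqrt_mul hl.le] at p2
  have hJ0 : 0 ≤ J := norm_nonneg _
  have hsX : 0 < √X := by positivity
  have : k * c' * X * J ≤ 4 * (D * (B - A)) / (√lam * √X) :=
    (mul_le_mul_of_nonneg_right hg2 hJ0).trans (hJ2.trans p2)
  have h7 : J ≤ 1 / (k * c') * (4 * (D * (B - A)) / √lam) / (X * √X) := by
    have h8 : J = (k * c' * X * J) / (k * c' * X) := by field_simp
    rw [h8]
    calc (k * c' * X * J) / (k * c' * X) ≤ (4 * (D * (B - A)) / (√lam * √X)) / (k * c' * X) := by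
          gcongr
      _ = _ := by field_simp
  refine h7.trans ?_
  gcongr
  linarith

lemma amp_deriv {w w1 w2 : ℝ → ℝ} {A B W : ℝ} (hw : Wt w w1 w2 A B W) (k X σ : ℝ)
    (hσ : 0 < σ) :
    HasDerivAt (amp w A B k X) (-(2 * π * Complex.I * (k * (k - 1) * X * σ ^ (k - 2) : ℝ)) *
      ∫ t in A..B, ((w t * (t - σ) : ℝ) : ℂ) * e (phs k X σ t)) σ := by
  have cw : Continuous w := continuous_iff_continuousAt.2 fun t => (hw.hd t).continuousAt
  have hAB := hw.hAB
  have hW : 0 ≤ W := (abs_nonneg _).trans (hw.b0 0)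
  obtain ⟨C, hC, h⟩ := rpow_bdd (k - 2) (σ / 2) (2 * σ) (by positivity)
  have cphs : ∀ s, ContinuousOn (fun t => phs k X s t) (Set.Icc A B) := fun s t ht =>
    (phs_d (hw.hA.trans_le ht.1)).continuousAt.continuousWithinAt
  set F : ℝ → ℝ → ℂ := fun s t => (w t : ℂ) * e (phs k X s t) with hF
  set F' : ℝ → ℝ → ℂ := fun s t => (w t : ℂ) * (((k * (k - 1) * X * s ^ (k - 2) * (s - t) : ℝ) : ℂ)
    * (2 * π * Complex.I * e (phs k X s t))) with hF'
  have cF : ∀ s, ContinuousOn (F s) (Set.Icc A B) := fun s =>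
    (Complex.continuous_ofReal.comp cw).continuousOn.mul (continuous_e.comp_continuousOn (cphs s))
  have cF' : ∀ s, ContinuousOn (F' s) (Set.Icc A B) := fun s => by
    refine (Complex.continuous_ofReal.comp cw).continuousOn.mul (ContinuousOn.mul ?_
      (continuousOn_const.mul (continuous_e.comp_continuousOn (cphs s))))
    exact Continuous.continuousOn (by fun_prop)
  have hI : Set.uIcc A B = Set.Icc A B := Set.uIcc_of_le hAB.le
  have hI2 : Set.uIoc A B ⊆ Set.Icc A B := by
    rw [Set.uIoc_of_le hAB.le]; exact Set.Ioc_subset_Icc_self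
  have main := (intervalIntegral.hasDerivAt_integral_of_dominated_loc_of_deriv_le
    (μ := volume) (F := F) (F' := F') (x₀ := σ) (s := Set.Ioo (σ / 2) (2 * σ)) (a := A) (b := B)
    (bound := fun _ => W * (|k * (k - 1) * X| * C * (2 * σ + B) * (2 * π)))
    (Ioo_mem_nhds (by linarith) (by linarith))
    (Filter.Eventually.of_forall fun s =>
      ((cF s).mono hI2).aestronglyMeasurable measurableSet_uIoc)
    (by apply ContinuousOn.intervalIntegrable; rw [hI]; exact cF σ)
    (((cF' σ).mono hI2).aestronglyMeasurable measurableSet_uIoc)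
    (Filter.Eventually.of_forall fun t ht s hs => by
      have ht' := hI2 ht
      have := hw.b0 t
      have h2 := h s (Set.Ioo_subset_Icc_self hs)
      have hs0 : 0 < s := by linarith [hs.1]
      have hst : |s - t| ≤ 2 * σ + B := by
        have := hw.hA
        rw [abs_le]; constructor <;> linarith [hs.1, hs.2, ht'.1, ht'.2]
      simp only [hF']
      rw [norm_mul, norm_mul, norm_mul, norm_mul, norm_mul, norm_e, Complex.norm_real,
        Complex.norm_real, Complex.norm_real, Complex.norm_I, Real.norm_eq_abs, Real.norm_eq_abs,
        Real.norm_eq_abs, abs_mul, abs_mul, abs_of_pos (Real.rpow_pos_of_pos hs0 (k - 2)),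
        abs_of_pos Real.pi_pos]
      simp only [Complex.norm_ofNat, mul_one]
      have := Real.pi_pos
      have := Real.rpow_pos_of_pos hs0 (k - 2)
      gcongr)
    (by exact intervalIntegrable_const)
    (Filter.Eventually.of_forall fun t ht s hs => by
      have hs0 : 0 < s := by linarith [hs.1]
      exact ((hasDerivAt_e _).scomp s (phs_dσ hs0)).const_mul (w t : ℂ))).2
  refine HasDerivAt.congr_deriv (f := amp w A B k X) main ?_
  rw [← intervalIntegral.integral_const_mul]
  refine intervalIntegral.integral_congr fun t ht => ?_
  simp only [hF']
  push_cast; ring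

lemma amp_lip {w w1 w2 : ℝ → ℝ} {A B W : ℝ} (hw : Wt w w1 w2 A B W) (k : ℝ) (hk : 1 < k)
    (a b : ℝ) (ha : 0 < a) :
    ∃ C > 0, ∀ X > 0, ∀ s ∈ Set.Icc a b, ∀ s' ∈ Set.Icc a b,
      ‖amp w A B k X s' - amp w A B k X s‖ ≤ C / √X * |s' - s| := by
  obtain ⟨C, hC, h⟩ := amp_mom hw k hk a b ha
  obtain ⟨C2, hC2, h2⟩ := rpow_bdd (k - 2) a b ha
  have hk1 : 0 < k - 1 := by linarith
  refine ⟨2 * π * (k * (k - 1) * C2) * C, by positivity, fun X hX s hs s' hs' => ?_⟩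
  have := (convex_Icc a b).norm_image_sub_le_of_norm_hasDerivWithin_le
    (f := amp w A B k X) (C := 2 * π * (k * (k - 1) * C2) * C / √X)
    (fun σ hσ => (amp_deriv hw k X σ (ha.trans_le hσ.1)).hasDerivWithinAt) ?_ hs hs'
  · simpa [Real.norm_eq_abs] using this
  · intro σ hσ
    have hp := Real.rpow_pos_of_pos (ha.trans_le hσ.1) (k - 2)
    rw [norm_mul, norm_neg, norm_mul, norm_mul, norm_mul, Complex.norm_I, Complex.norm_real,
      Complex.norm_real, Real.norm_eq_abs, Real.norm_eq_abs, abs_of_pos Real.pi_pos,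
      abs_of_pos (by positivity)]
    simp only [Complex.norm_ofNat, mul_one]
    have h3 := h X hX σ hσ
    have h4 := h2 σ hσ
    have hsX : 0 < √X := by positivity
    calc 2 * π * (k * (k - 1) * X * σ ^ (k - 2)) * _ ≤
        2 * π * (k * (k - 1) * X * C2) * (C / (X * √X)) := by gcongr
      _ = _ := by field_simp


noncomputable def Iint (w : ℝ → ℝ) (A B k X ν : ℝ) : ℂ :=
  ∫ t in A..B, (w t : ℂ) * e (X * t ^ k - ν * t)

noncomputable def Gsum (w : ℝ → ℝ) (B N k x : ℝ) : ℂ :=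
  ∑ n ∈ Finset.range (⌊B * N⌋₊ + 1), ((w ((n : ℝ) / N) : ℝ) : ℂ) * e (x * (n : ℝ) ^ k)

open FourierTransform in
lemma fourier_eq_Iint {w w1 w2 : ℝ → ℝ} {A B W : ℝ} (hw : Wt w w1 w2 A B W) (k N x : ℝ)
    (hN : 0 < N) (m : ℝ) :
    𝓕 (fun y : ℝ => ((w (y / N) : ℝ) : ℂ) * e (x * y ^ k)) m =
      N * Iint w A B k (x * N ^ k) (m * N) := by
  rw [fourier_real_eq_integral_exp_smul]
  set g : ℝ → ℂ := fun v => Complex.exp (↑(-2 * π * v * m) * Complex.I) •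
    (((w (v / N) : ℝ) : ℂ) * e (x * v ^ k)) with hg
  have h1 := MeasureTheory.Measure.integral_comp_mul_left g N
  have h2 : ∫ y, g y = N * ∫ s, g (N * s) := by
    rw [h1, abs_of_pos (inv_pos.2 hN), Complex.real_smul, ← mul_assoc]
    push_cast
    rw [mul_inv_cancel₀ (by exact_mod_cast hN.ne'), one_mul]
  rw [h2]
  congr 1
  unfold Iint
  rw [intervalIntegral.integral_of_le hw.hAB.le,
    ← setIntegral_eq_integral_of_forall_compl_eq_zero (s := Set.Ioc A B) (f := fun s => g (N * s))]
  · refine setIntegral_congr_fun measurableSet_Ioc fun s hs => ?_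
    have hs0 : 0 < s := hw.hA.trans hs.1
    simp only [hg, smul_eq_mul]
    rw [mul_div_cancel_left₀ s hN.ne', Real.mul_rpow hN.le hs0.le]
    have : Complex.exp (↑(-2 * π * (N * s) * m) * Complex.I) = e (-(m * N * s)) := by
      unfold e; congr 1; push_cast; ring
    rw [this, mul_left_comm, ← e_add]
    congr 2; ring
  · intro s hs
    have : w s = 0 := by
      apply hw.z0
      by_contra hcon
      push Not at hcon
      exact hs ⟨hcon.1, hcon.2.le⟩
    simp only [hg]
    rw [mul_div_cancel_left₀ s hN.ne', this]; simp

lemma tsum_eq_Gsum {w w1 w2 : ℝ → ℝ} {A B W : ℝ} (hw : Wt w w1 w2 A B W) (k N x : ℝ)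
    (hN : 0 < N) :
    ∑' n : ℤ, ((w ((n : ℝ) / N) : ℝ) : ℂ) * e (x * (n : ℝ) ^ k) = Gsum w B N k x := by
  have hz : ∀ n ∉ (Finset.range (⌊B * N⌋₊ + 1)).map Nat.castEmbedding,
      ((w (((n : ℤ) : ℝ) / N) : ℝ) : ℂ) * e (x * (n : ℝ) ^ k) = 0 := by
    intro n hn
    have : w ((n : ℝ) / N) = 0 := by
      apply hw.z0
      by_contra hcon
      push Not at hcon
      apply hn
      have h0 : (0 : ℝ) < n := by
        have := hw.hA.trans hcon.1
        rwa [lt_div_iff₀ hN, zero_mul] at this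
      have h0' : 0 < n := by exact_mod_cast h0
      have h1 : (n : ℝ) < B * N := by
        have := hcon.2; rwa [div_lt_iff₀ hN] at this
      rw [Finset.mem_map]
      refine ⟨n.toNat, ?_, by simp [h0'.le]⟩
      rw [Finset.mem_range, Nat.lt_succ_iff]
      apply Nat.le_floor
      have : ((n.toNat : ℕ) : ℝ) = (n : ℝ) := by
        have h5 : ((n.toNat : ℕ) : ℤ) = n := Int.toNat_of_nonneg h0'.le
        exact_mod_cast h5
      rw [this]; exact h1.le
    rw [this]; simp
  rw [tsum_eq_sum hz, Finset.sum_map]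
  rfl

lemma poisson {w w1 w2 : ℝ → ℝ} {A B W : ℝ} (hw : Wt w w1 w2 A B W) (k N x : ℝ)
    (hk : 1 < k) (hN : 0 < N)
    (hs : Summable fun m : ℤ => Iint w A B k (x * N ^ k) (m * N)) :
    Gsum w B N k x = N * ∑' m : ℤ, Iint w A B k (x * N ^ k) (m * N) := by
  have cw : Continuous w := continuous_iff_continuousAt.2 fun t => (hw.hd t).continuousAt
  set f : ℝ → ℂ := fun y : ℝ => ((w (y / N) : ℝ) : ℂ) * e (x * y ^ k) with hf
  have hc : Continuous f := by
    refine (Complex.continuous_ofReal.comp (cw.comp (continuous_id.div_const N))).mul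
      (continuous_e.comp (continuous_const.mul (Real.continuous_rpow_const (by linarith))))
  have hdec : f =O[Filter.cocompact ℝ] fun x : ℝ => |x| ^ (-(2:ℝ)) := by
    have : f =ᶠ[Filter.cocompact ℝ] fun _ => 0 := by
      have hK : IsCompact (Set.Icc (A * N) (B * N)) := isCompact_Icc
      filter_upwards [hK.compl_mem_cocompact] with y hy
      have : w (y / N) = 0 := by
        apply hw.z0
        by_contra hcon
        push Not at hcon
        apply hy
        rw [lt_div_iff₀ hN, div_lt_iff₀ hN] at hcon
        exact ⟨hcon.1.le, hcon.2.le⟩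
      simp [hf, this]
    exact this.trans_isBigO (Asymptotics.isBigO_zero _ _)
  have h4 := Real.tsum_eq_tsum_fourier_of_rpow_decay_of_summable hc (by norm_num : (1:ℝ) < 2) hdec
    (by
      have : (fun n : ℤ => FourierTransform.fourier f (n : ℝ)) = fun n : ℤ =>
          (N : ℂ) * Iint w A B k (x * N ^ k) (n * N) := by
        funext n; exact fourier_eq_Iint hw k N x hN n
      rw [this]; exact hs.mul_left _) 0
  rw [← tsum_eq_Gsum hw k N x hN, ← tsum_mul_left]
  have h5 : ∀ n : ℤ, FourierTransform.fourier f (n : ℝ) = (N : ℂ) * Iint w A B k (x * N ^ k) (n * N) :=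
    fun n => fourier_eq_Iint hw k N x hN n
  simp only [zero_add, h5] at h4
  rw [show (∑' n : ℤ, ((w ((n : ℝ) / N) : ℝ) : ℂ) * e (x * (n : ℝ) ^ k)) = ∑' n : ℤ, f n from rfl, h4]
  refine tsum_congr fun n => ?_
  simp

lemma poisson_main {w w1 w2 : ℝ → ℝ} {A B W : ℝ} (hw : Wt w w1 w2 A B W) (k : ℝ) (hk : 1 < k) :
    ∃ C > 0, ∀ N > 0, ∀ t > 0, ∀ x > 0, t ≤ x * N ^ k → x * N ^ k ≤ 2 * t →
      ‖Gsum w B N k x - N * ∑ m ∈ Finset.Icc ⌈k * A ^ (k - 1) / 2 * t / N⌉₊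
        ⌊4 * k * B ^ (k - 1) * t / N⌋₊, Iint w A B k (x * N ^ k) (m * N)‖ ≤ C * (N / t ^ 2 + 1 / N) := by
  have hA := hw.hA
  have hB : 0 < B := hA.trans hw.hAB
  have hk0 : 0 < k := by linarith
  have hAk := Real.rpow_pos_of_pos hA (k - 1)
  have hBk := Real.rpow_pos_of_pos hB (k - 1)
  set c1 := k * A ^ (k - 1) / 2 with hc1
  set c2 := 2 * k * B ^ (k - 1) with hc2
  have c1p : 0 < c1 := by positivity
  have c2p : 0 < c2 := by positivity
  set c := min (min (1/4) (c2 / 4)) (c1 / (1 + c1)) with hc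
  have hcp : 0 < c := by
    rw [hc]; exact lt_min (lt_min (by norm_num) (by positivity)) (by positivity)
  have hcA : c ≤ 1/4 := (min_le_left _ _).trans (min_le_left _ _)
  have hcB : c ≤ c2/4 := (min_le_left _ _).trans (min_le_right _ _)
  have hcC : c * (1 + c1) ≤ c1 := by
    have : c ≤ c1 / (1 + c1) := min_le_right _ _
    rwa [le_div_iff₀ (by positivity)] at this
  obtain ⟨C, hC, hns⟩ := nonstat hw k c hk hcp
  have hS : Summable fun m : ℤ => 1 / (m : ℝ) ^ 2 := Real.summable_one_div_int_pow.2 (by norm_num)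
  set S := ∑' m : ℤ, 1 / (m : ℝ) ^ 2 with hSdef
  have hS0 : 0 ≤ S := tsum_nonneg fun m => by positivity
  refine ⟨C * (1 + S), by positivity, ?_⟩
  intro N hN t ht x hx htX hX2
  set X := x * N ^ k with hX
  have hXp : 0 < X := by linarith
  rw [show 4 * k * B ^ (k - 1) * t / N = 2 * c2 * t / N by rw [hc2]; ring]
  set F := (Finset.Icc ⌈c1 * t / N⌉₊ ⌊2 * c2 * t / N⌋₊).map (Nat.castEmbedding (R := ℤ)) with hF
  have hbd : ∀ m : ℤ, m ∉ F → ‖Iint w A B k X (m * N)‖ ≤ C / (X + |m * N|) ^ 2 := by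
    intro m hm
    apply hns X hXp
    intro s hs
    have hs1 : A ^ (k - 1) ≤ s ^ (k - 1) := Real.rpow_le_rpow hA.le hs.1 (by linarith)
    have hs2 : s ^ (k - 1) ≤ B ^ (k - 1) :=
      Real.rpow_le_rpow (hA.trans_le hs.1).le hs.2 (by linarith)
    have l1 : 2 * c1 * X ≤ k * X * s ^ (k - 1) := by
      rw [hc1]
      calc 2 * (k * A ^ (k - 1) / 2) * X = k * X * A ^ (k - 1) := by ring
        _ ≤ _ := by gcongr
    have l2 : k * X * s ^ (k - 1) ≤ c2 * X / 2 := by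
      rw [hc2]
      calc k * X * s ^ (k - 1) ≤ k * X * B ^ (k - 1) := by gcongr
        _ = _ := by ring
    have hor : (m : ℝ) * N ≤ c1 * t ∨ 2 * c2 * t ≤ m * N := by
      by_contra hcon
      push Not at hcon
      apply hm
      have hm0 : (0:ℝ) < m := by
        have : 0 < (m : ℝ) * N := lt_trans (by positivity) hcon.1
        exact pos_of_mul_pos_left this hN.le
      have hm0' : 0 < m := by exact_mod_cast hm0
      have hcast : ((m.toNat : ℕ) : ℝ) = (m : ℝ) := by
        have h5 : ((m.toNat : ℕ) : ℤ) = m := Int.toNat_of_nonneg hm0'.le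
        exact_mod_cast h5
      rw [hF, Finset.mem_map]
      refine ⟨m.toNat, ?_, by simp [hm0'.le]⟩
      rw [Finset.mem_Icc]
      constructor
      · rw [Nat.ceil_le, hcast, div_le_iff₀ hN]; exact hcon.1.le
      · apply Nat.le_floor; rw [hcast, le_div_iff₀ hN]; exact hcon.2.le
    rcases hor with hor | hor
    · have h1 : (m : ℝ) * N ≤ c1 * X := hor.trans (by gcongr)
      refine le_trans ?_ (le_abs_self _)
      rcases abs_cases ((m : ℝ) * N) with ⟨h2, h3⟩ | ⟨h2, h3⟩
      · rw [h2]
        have h5 : c * ((m : ℝ) * N) ≤ c * (c1 * X) := by gcongr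
        nlinarith
      · rw [h2]
        have h6 : c * (X + -(m * N)) = c * X + c * (-(m * N)) := by ring
        have h7 : c * (-((m : ℝ) * N)) ≤ 1 * (-(m * N)) := by
          apply mul_le_mul_of_nonneg_right (by linarith) (by linarith)
        have h8 : c * X ≤ c1 * X := by
          apply mul_le_mul_of_nonneg_right _ hXp.le
          nlinarith
        have : 0 < c1 * X := by positivity
        linarith
    · have h1 : c2 * X ≤ (m : ℝ) * N := le_trans (by nlinarith) hor
      have h0 : 0 < (m : ℝ) * N := lt_of_lt_of_le (by positivity) h1
      rw [abs_of_pos h0, abs_sub_comm]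
      refine le_trans ?_ (le_abs_self _)
      have h5 : c * X ≤ c2 / 4 * X := by gcongr
      have h6 : c * ((m : ℝ) * N) ≤ 1 / 4 * (m * N) := by gcongr
      have h7 : c * (X + m * N) = c * X + c * (m * N) := by ring
      linarith
  set g : ℤ → ℝ := fun m => C * ((if m = 0 then 1 / t ^ 2 else 0) + 1 / N ^ 2 * (1 / (m : ℝ) ^ 2))
    with hg
  have hgs : HasSum g (C * (1 / t ^ 2 + 1 / N ^ 2 * S)) := by
    exact ((hasSum_ite_eq (0 : ℤ) (1 / t ^ 2)).add (hS.hasSum.mul_left (1 / N ^ 2))).mul_left C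
  have hgb : ∀ m : ℤ, m ∉ F → ‖Iint w A B k X (m * N)‖ ≤ g m := by
    intro m hm
    refine (hbd m hm).trans ?_
    simp only [hg]
    rw [div_eq_mul_one_div]
    apply mul_le_mul_of_nonneg_left _ hC.le
    by_cases h0 : m = 0
    · subst h0; simp only [Int.cast_zero, zero_mul, abs_zero, add_zero, if_true]
      have : 1 / X ^ 2 ≤ 1 / t ^ 2 := by gcongr
      simpa using this
    · rw [if_neg h0, zero_add]
      have hm0 : (m : ℝ) ≠ 0 := by exact_mod_cast h0
      have : 0 < |(m : ℝ) * N| := abs_pos.2 (mul_ne_zero hm0 hN.ne')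
      have e2 : 1 / N ^ 2 * (1 / (m : ℝ) ^ 2) = 1 / |(m : ℝ) * N| ^ 2 := by
        rw [sq_abs]; field_simp
      rw [e2]; gcongr; linarith
  have hsumm : Summable fun m : ℤ => Iint w A B k X (m * N) := by
    have hgs' := hgs.summable
    refine Summable.of_norm_bounded_eventually hgs' ?_
    have hfin : {m : ℤ | m ∈ F}.Finite := F.finite_toSet
    filter_upwards [hfin.compl_mem_cofinite] with m hm
    exact hgb m hm
  have hP := poisson hw k N x hk hN hsumm
  rw [hP, ← mul_sub, norm_mul, Complex.norm_real, Real.norm_eq_abs, abs_of_pos hN]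
  have hsplit : ∑' m : ℤ, Iint w A B k X (m * N) - ∑ m ∈ Finset.Icc ⌈c1 * t / N⌉₊
        ⌊2 * c2 * t / N⌋₊, Iint w A B k X (m * N) =
      ∑' m : ℤ, (if m ∈ F then 0 else Iint w A B k X (m * N)) := by
    have h1 : ∑ m ∈ Finset.Icc ⌈c1 * t / N⌉₊ ⌊2 * c2 * t / N⌋₊, Iint w A B k X (m * N) =
        ∑ m ∈ F, Iint w A B k X (m * N) := by
      rw [hF, Finset.sum_map]; simp
    have h2 : ∑ m ∈ F, Iint w A B k X (m * N) =
        ∑' m : ℤ, (if m ∈ F then Iint w A B k X (m * N) else 0) := by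
      rw [tsum_eq_sum (s := F) (fun m hm => by simp [hm])]
      exact Finset.sum_congr rfl fun m hm => by simp [hm]
    have h3 : Summable fun m : ℤ => (if m ∈ F then Iint w A B k X (m * N) else 0) :=
      summable_of_ne_finset_zero (s := F) (fun m hm => by simp [hm])
    rw [h1, h2, ← hsumm.tsum_sub h3]
    refine tsum_congr fun m => ?_
    by_cases hm : m ∈ F <;> simp [hm]
  rw [hsplit]
  have hfin := tsum_of_norm_bounded (f := fun m : ℤ => if m ∈ F then 0 else Iint w A B k X (m * N))
    hgs (fun m => by
      by_cases hm : m ∈ F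
      · simp only [hm, if_true, norm_zero, hg]
        have : (0:ℝ) ≤ if m = 0 then 1 / t ^ 2 else 0 := by split_ifs <;> positivity
        positivity
      · simp only [hm, if_false]; exact hgb m hm)
  calc N * _ ≤ N * (C * (1 / t ^ 2 + 1 / N ^ 2 * S)) := by gcongr
    _ = C * (N / t ^ 2 + S * (1 / N)) := by field_simp
    _ ≤ C * (1 + S) * (N / t ^ 2 + 1 / N) := by
      have : 0 ≤ S * (N / t ^ 2) := by positivity
      have : 0 ≤ 1 / N := by positivity
      rw [mul_assoc]
      apply mul_le_mul_of_nonneg_left _ hC.le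
      linarith


lemma abel_sum (a z : ℕ → ℂ) (m1 : ℕ) (j : ℕ) :
    ∑ m ∈ Finset.Icc m1 (m1 + j), a m * z m = a (m1 + j) * ∑ m ∈ Finset.Icc m1 (m1 + j), z m
      - ∑ i ∈ Finset.Ico m1 (m1 + j), (a (i + 1) - a i) * ∑ m ∈ Finset.Icc m1 i, z m := by
  induction j with
  | zero => simp
  | succ j ih =>
    rw [← add_assoc, Finset.sum_Icc_succ_top (by lia), Finset.sum_Icc_succ_top (by lia), ih,
      Finset.sum_Ico_succ_top (by lia)]
    ring

lemma abel_bound (a z : ℕ → ℂ) (d : ℕ → ℝ) (D : ℝ) (m1 m2 : ℕ) (h : m1 ≤ m2)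
    (hD : ‖a m2‖ ≤ D) (hd : ∀ i ∈ Finset.Ico m1 m2, ‖a (i + 1) - a i‖ ≤ d i) :
    ‖∑ m ∈ Finset.Icc m1 m2, a m * z m‖ ≤
      ∑ i ∈ Finset.Icc m1 m2, (if i = m2 then D else d i) * ‖∑ m ∈ Finset.Icc m1 i, z m‖ := by
  obtain ⟨j, rfl⟩ := Nat.exists_eq_add_of_le h
  have hsplit : ∀ F : ℕ → ℝ, ∑ i ∈ Finset.Icc m1 (m1 + j), F i =
      F (m1 + j) + ∑ i ∈ Finset.Ico m1 (m1 + j), F i := by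
    intro F
    rw [← Finset.Ico_insert_right (by lia : m1 ≤ m1 + j), Finset.sum_insert (by simp)]
  rw [abel_sum, hsplit, if_pos rfl]
  refine (norm_sub_le _ _).trans (add_le_add ?_ ?_)
  · rw [norm_mul]; gcongr
  · refine (norm_sum_le _ _).trans (Finset.sum_le_sum fun i hi => ?_)
    rw [if_neg (by rw [Finset.mem_Ico] at hi; lia), norm_mul]
    have := hd i hi
    gcongr

lemma Iint_eq_amp (w : ℝ → ℝ) (A B k X ν : ℝ) (hk : 1 < k) (hX : 0 < X)
    (hν : 0 < ν) :
    Iint w A B k X ν = amp w A B k X ((ν / (k * X)) ^ (1 / (k - 1))) *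
      e (-((k - 1) * X * (ν / (k * X)) ^ (k / (k - 1)))) := by
  unfold Iint amp
  rw [← intervalIntegral.integral_mul_const]
  refine intervalIntegral.integral_congr fun t ht => ?_
  have hk1 : 0 < k - 1 := by linarith
  have hk0 : 0 < k := by linarith
  have hb : 0 < ν / (k * X) := by positivity
  simp only [phs]
  rw [mul_assoc, ← e_add]
  have h1 : ((ν / (k * X)) ^ (1 / (k - 1))) ^ (k - 1) = ν / (k * X) := by
    rw [← Real.rpow_mul hb.le, one_div_mul_cancel hk1.ne', Real.rpow_one]
  have h2 : ((ν / (k * X)) ^ (1 / (k - 1))) ^ k = (ν / (k * X)) ^ (k / (k - 1)) := by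
    rw [← Real.rpow_mul hb.le]; congr 1; ring
  rw [h1, h2]
  congr 2
  field_simp
  ring

lemma phase_eq (k x N m : ℝ) (hk : 1 < k) (hx : 0 < x) (hN : 0 < N) (hm : 0 < m) :
    (k - 1) * (x * N ^ k) * (m * N / (k * (x * N ^ k))) ^ (k / (k - 1)) =
      x ^ (-(1 / (k - 1))) * ((k - 1) * k ^ (-(k / (k - 1))) * m ^ (k / (k - 1))) := by
  have hk1 : 0 < k - 1 := by linarith
  have hk0 : 0 < k := by linarith
  have e1 : k / (k - 1) = 1 + 1 / (k - 1) := by field_simp; ring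
  have hNk := Real.rpow_pos_of_pos hN k
  rw [Real.div_rpow (by positivity) (by positivity), Real.mul_rpow hm.le hN.le,
    Real.mul_rpow hk0.le (by positivity), Real.mul_rpow hx.le (by positivity), ← Real.rpow_mul hN.le,
    Real.rpow_neg hk0.le]
  have e2 : N ^ (k * (k / (k - 1))) = N ^ k * N ^ (k / (k - 1)) := by
    rw [← Real.rpow_add hN]; congr 1; field_simp; ring
  have e3 : x ^ (k / (k - 1)) = x * x ^ (1 / (k - 1)) := by
    rw [e1, Real.rpow_add hx, Real.rpow_one]
  rw [e2, e3, Real.rpow_neg hx.le]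
  have p1 := Real.rpow_pos_of_pos hx (1 / (k - 1))
  have p2 := Real.rpow_pos_of_pos hN (k / (k - 1))
  have p3 := Real.rpow_pos_of_pos hk0 (k / (k - 1))
  field_simp

/-- dual sum -/
noncomputable def Bsum (k : ℝ) (m1 j : ℕ) (y : ℝ) : ℂ :=
  ∑ m ∈ Finset.Icc m1 j, e (y * (-((k - 1) * k ^ (-(k / (k - 1)))) * (m : ℝ) ^ (k / (k - 1))))

lemma stat_bound {w w1 w2 : ℝ → ℝ} {A B W : ℝ} (hw : Wt w w1 w2 A B W) (k : ℝ) (hk : 1 < k) :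
    ∃ C > 0, ∀ N > 0, ∀ t > 0, ∃ d : ℕ → ℝ, (∀ j, 0 ≤ d j) ∧
      ∑ j ∈ Finset.Icc ⌈k * A ^ (k - 1) / 2 * t / N⌉₊ ⌊4 * k * B ^ (k - 1) * t / N⌋₊, d j ≤ C / √t ∧
      ∀ x > 0, t ≤ x * N ^ k → x * N ^ k ≤ 2 * t →
      ‖∑ m ∈ Finset.Icc ⌈k * A ^ (k - 1) / 2 * t / N⌉₊
        ⌊4 * k * B ^ (k - 1) * t / N⌋₊, Iint w A B k (x * N ^ k) (m * N)‖ ≤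
      ∑ j ∈ Finset.Icc ⌈k * A ^ (k - 1) / 2 * t / N⌉₊ ⌊4 * k * B ^ (k - 1) * t / N⌋₊,
        d j * ‖Bsum k ⌈k * A ^ (k - 1) / 2 * t / N⌉₊ j (x ^ (-(1 / (k - 1))))‖ := by
  have hA := hw.hA
  have hB : 0 < B := hA.trans hw.hAB
  have hk0 : 0 < k := by linarith
  have hk1 : 0 < k - 1 := by linarith
  have hAk := Real.rpow_pos_of_pos hA (k - 1)
  have hBk := Real.rpow_pos_of_pos hB (k - 1)
  set κ := 1 / (k - 1) with hκ
  have κp : 0 < κ := by positivity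
  set c1 := k * A ^ (k - 1) / 2 with hc1
  set c2 := 4 * k * B ^ (k - 1) with hc2
  have c1p : 0 < c1 := by positivity
  have c2p : 0 < c2 := by positivity
  set a0 := (c1 / (2 * k)) ^ κ with ha0
  set b0 := (c2 / k) ^ κ with hb0
  have a0p : 0 < a0 := Real.rpow_pos_of_pos (by positivity) _
  have b0p : 0 < b0 := Real.rpow_pos_of_pos (by positivity) _
  obtain ⟨C1, hC1, h1⟩ := amp_bound hw k hk
  obtain ⟨C2, hC2, h2⟩ := amp_lip hw k hk a0 b0 a0p
  refine ⟨C1 + C2 * b0, by positivity, ?_⟩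
  intro N hN t ht
  set m1 := ⌈c1 * t / N⌉₊ with hm1
  set m2 := ⌊c2 * t / N⌋₊ with hm2
  have hst : 0 < √t := by positivity
  by_cases h12 : m1 ≤ m2
  swap
  · refine ⟨fun _ => 0, fun _ => le_rfl, ?_, ?_⟩
    · simp; positivity
    · intro x _ _ _
      rw [Finset.Icc_eq_empty h12]; simp
  set g : ℝ := C2 / √t * (N / (k * t)) ^ κ with hg
  have hgp : 0 < g := by
    have : 0 < (N / (k * t)) ^ κ := Real.rpow_pos_of_pos (by positivity) _
    positivity
  set d : ℕ → ℝ := fun i => g * (((i + 1 : ℕ) : ℝ) ^ κ - (i : ℝ) ^ κ) with hd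
  have hmono : ∀ i : ℕ, (i : ℝ) ^ κ ≤ ((i + 1 : ℕ) : ℝ) ^ κ := fun i =>
    Real.rpow_le_rpow (by positivity) (by push_cast; linarith) κp.le
  have hd0 : ∀ i, 0 ≤ d i := fun i => mul_nonneg hgp.le (by linarith [hmono i])
  refine ⟨fun i => if i = m2 then C1 / √t else d i, ?_, ?_, ?_⟩
  · intro j; dsimp only; split_ifs
    · positivity
    · exact hd0 j
  · rw [← Finset.Ico_insert_right h12, Finset.sum_insert (by simp), if_pos rfl]
    have h3 : ∑ x ∈ Finset.Ico m1 m2, (if x = m2 then C1 / √t else d x) = ∑ x ∈ Finset.Ico m1 m2, d x :=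
      Finset.sum_congr rfl fun i hi => by rw [if_neg (by rw [Finset.mem_Ico] at hi; lia)]
    rw [h3, ← Finset.mul_sum, Finset.sum_Ico_sub (fun i : ℕ => (i : ℝ) ^ κ) h12]
    have h4 : (m2 : ℝ) ^ κ - (m1 : ℝ) ^ κ ≤ (c2 * t / N) ^ κ := by
      have := Real.rpow_nonneg (Nat.cast_nonneg m1 : (0:ℝ) ≤ m1) κ
      have h5 : (m2 : ℝ) ^ κ ≤ (c2 * t / N) ^ κ :=
        Real.rpow_le_rpow (by positivity) (Nat.floor_le (by positivity)) κp.le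
      linarith
    have h6 : (N / (k * t)) ^ κ * (c2 * t / N) ^ κ = b0 := by
      rw [← Real.mul_rpow (by positivity) (by positivity), hb0]
      congr 1; field_simp
    calc C1 / √t + g * ((m2 : ℝ) ^ κ - (m1 : ℝ) ^ κ) ≤ C1 / √t + g * (c2 * t / N) ^ κ := by gcongr
      _ = C1 / √t + C2 / √t * ((N / (k * t)) ^ κ * (c2 * t / N) ^ κ) := by rw [hg]; ring
      _ = _ := by rw [h6]; ring
  · intro x hx htX hX2
    set X := x * N ^ k with hX
    have hXp : 0 < X := by linarith
    have hsX : √t ≤ √X := Real.sqrt_le_sqrt htX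
    have hm1pos : 0 < m1 := Nat.ceil_pos.2 (by positivity)
    set s : ℕ → ℝ := fun m => ((m : ℝ) * N / (k * X)) ^ κ with hs
    have hsmem : ∀ m ∈ Finset.Icc m1 m2, s m ∈ Set.Icc a0 b0 := by
      intro m hm
      rw [Finset.mem_Icc] at hm
      have l1 : c1 * t ≤ m * N := by
        have : c1 * t / N ≤ m := Nat.ceil_le.1 hm.1
        rwa [div_le_iff₀ hN] at this
      have l2 : m * N ≤ c2 * t := by
        have : (m : ℝ) ≤ c2 * t / N := (Nat.le_floor_iff (by positivity)).1 hm.2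
        rwa [le_div_iff₀ hN] at this
      constructor
      · apply Real.rpow_le_rpow (by positivity) _ κp.le
        rw [div_le_div_iff₀ (by positivity) (by positivity)]
        calc c1 * (k * X) ≤ c1 * (k * (2 * t)) := by gcongr
          _ = (c1 * t) * (2 * k) := by ring
          _ ≤ _ := by gcongr
      · apply Real.rpow_le_rpow (by positivity) _ κp.le
        rw [div_le_div_iff₀ (by positivity) (by positivity)]
        calc m * N * k ≤ (c2 * t) * k := by gcongr
          _ ≤ (c2 * X) * k := by gcongr
          _ = _ := by ring
    have hterm : ∀ m ∈ Finset.Icc m1 m2, Iint w A B k X (m * N) = amp w A B k X (s m) *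
        e (x ^ (-κ) * (-((k - 1) * k ^ (-(k / (k - 1)))) * (m : ℝ) ^ (k / (k - 1)))) := by
      intro m hm
      rw [Finset.mem_Icc] at hm
      have hmp : (0 : ℝ) < m := by exact_mod_cast (lt_of_lt_of_le hm1pos hm.1)
      rw [Iint_eq_amp w A B k X _ hk hXp (by positivity), hX, phase_eq k x N m hk hx hN hmp]
      congr 2; ring
    rw [Finset.sum_congr rfl hterm]
    refine abel_bound (fun m => amp w A B k X (s m)) (fun m =>
      e (x ^ (-κ) * (-((k - 1) * k ^ (-(k / (k - 1)))) * (m : ℝ) ^ (k / (k - 1))))) d (C1 / √t) m1 m2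
      h12 ?_ ?_
    · exact (h1 X hXp _).trans (by gcongr)
    · intro i hi
      rw [Finset.mem_Ico] at hi
      refine (h2 X hXp _ (hsmem i (by rw [Finset.mem_Icc]; lia)) _
        (hsmem (i + 1) (by rw [Finset.mem_Icc]; lia))).trans ?_
      have h7 : ∀ j : ℕ, s j = (N / (k * X)) ^ κ * (j : ℝ) ^ κ := by
        intro j
        simp only [hs]
        rw [← Real.mul_rpow (by positivity) (by positivity)]
        congr 1; ring
      have hdi : 0 ≤ ((i + 1 : ℕ) : ℝ) ^ κ - (i : ℝ) ^ κ := by linarith [hmono i]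
      have hq : 0 < (N / (k * X)) ^ κ := Real.rpow_pos_of_pos (by positivity) _
      rw [h7, h7, ← mul_sub, abs_of_nonneg (mul_nonneg hq.le hdi)]
      simp only [hd, hg]
      have h8 : (N / (k * X)) ^ κ ≤ (N / (k * t)) ^ κ :=
        Real.rpow_le_rpow (by positivity) (by gcongr) κp.le
      rw [mul_assoc (C2 / √t)]
      gcongr


/-- Robert–Sargos type counting bound with exponent loss `γ`. -/
def RS (γ : ℝ) : Prop := ∀ k > (1:ℝ), ∀ a b : ℝ, 0 < a → a < b → ∃ C > 0, ∀ N ≥ (1:ℝ), ∀ T > (0:ℝ),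
  ∀ S : Finset ℕ, (∀ n ∈ S, a * N ≤ n ∧ (n:ℝ) ≤ b * N) →
    Q4 S (fun _ => 1) (fun n => (n:ℝ) ^ k) (T / N ^ k) ≤ C * (N ^ 4 / T + N ^ (2 + γ))

lemma continuous_Bsum (k : ℝ) (m1 j : ℕ) : Continuous (Bsum k m1 j) := by
  unfold Bsum
  exact continuous_finsetSum _ fun m _ => continuous_e.comp (continuous_id.mul continuous_const)

lemma Bsum_contOn (k : ℝ) (m1 j : ℕ) (p V : ℝ) (hV : 0 < V) :
    ContinuousOn (fun x : ℝ => ‖Bsum k m1 j (x ^ p)‖ ^ 4) (Set.uIcc V (2 * V)) := by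
  rw [Set.uIcc_of_le (by linarith)]
  refine (((continuous_Bsum k m1 j).comp_continuousOn ?_).norm).pow 4
  intro x hx
  exact (Real.continuousAt_rpow_const x p (Or.inl (hV.trans_le hx.1).ne')).continuousWithinAt

lemma Bsum_int (k : ℝ) (hk : 1 < k) (V : ℝ) (hV : 0 < V) (m1 j : ℕ) :
    ∫ x in V..(2 * V), ‖Bsum k m1 j (x ^ (-(1 / (k - 1))))‖ ^ 4 ≤
      rexp π * 2 ^ (1 / (k - 1) + 1) * (k - 1) * V * Q4 (Finset.Icc m1 j) (fun _ => 1)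
        (fun m => (m : ℝ) ^ (k / (k - 1))) (((k - 1) * k ^ (-(k / (k - 1)))) * V ^ (-(1 / (k - 1)))) := by
  have hk1 : 0 < k - 1 := by linarith
  have hk0 : 0 < k := by linarith
  set κ := 1 / (k - 1) with hκ
  have κp : 0 < κ := by positivity
  set cc := (k - 1) * k ^ (-(k / (k - 1))) with hcc
  have ccp : 0 < cc := mul_pos hk1 (Real.rpow_pos_of_pos hk0 _)
  set Y := V ^ (-κ) with hY
  have Yp : 0 < Y := Real.rpow_pos_of_pos hV _
  set S := Finset.Icc m1 j
  set ω : ℕ → ℝ := fun m => -cc * (m : ℝ) ^ (k / (k - 1)) with hω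
  have hB : ∀ y, Bsum k m1 j y = ∑ n ∈ S, (1 : ℂ) * e (y * ω n) := by
    intro y; unfold Bsum; simp only [one_mul, hω, S]
    rfl
  set g : ℝ → ℝ := fun y => ‖Bsum k m1 j y‖ ^ 4 * rexp (-π * (y / Y) ^ 2) with hg
  have hgi : Integrable g := by
    have := four_integrable S (fun _ => (1:ℂ)) ω Y Yp
    simp only [hg, hB]; exact this
  have hgle : ∫ y, g y ≤ Y * Q4 S (fun _ => 1) (fun m => (m : ℝ) ^ (k / (k - 1))) (cc * Y) := by
    have := four_le S (fun _ => (1:ℂ)) (fun _ => 1) ω (fun n _ => by simp) Y Yp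
    simp only [hg, hB]
    refine this.trans (le_of_eq ?_)
    rw [hω, Q4_scale_freq, abs_neg, abs_of_pos ccp]
  have hg0 : ∀ y, 0 ≤ g y := fun y => by positivity
  have h1 := integral_comp_rpow_Ioi g (p := -κ) (neg_lt_zero.2 κp).ne
  have h2 := (integrableOn_Ioi_comp_rpow_iff g (p := -κ) (neg_lt_zero.2 κp).ne).2 hgi.integrableOn
  have h3 : ∫ y in Set.Ioi 0, g y ≤ ∫ y, g y :=
    setIntegral_le_integral hgi (Filter.Eventually.of_forall hg0)
  set q := rexp π * (2 * V) ^ (κ + 1) / κ with hq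
  have hVp : 0 < (2 * V) ^ (κ + 1) := Real.rpow_pos_of_pos (by positivity) _
  have hqp : 0 < q := by positivity
  rw [abs_neg, abs_of_pos κp] at h1 h2
  have hpt : ∀ x ∈ Set.Icc V (2 * V), ‖Bsum k m1 j (x ^ (-κ))‖ ^ 4 ≤
      q * ((κ * x ^ (-κ - 1)) • g (x ^ (-κ))) := by
    intro x hx
    have hx0 : 0 < x := hV.trans_le hx.1
    have hxk := Real.rpow_pos_of_pos hx0 (-κ - 1)
    have l1 : 1 ≤ (2 * V) ^ (κ + 1) * x ^ (-κ - 1) := by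
      have : x ^ (-κ - 1) = (x ^ (κ + 1))⁻¹ := by
        rw [← Real.rpow_neg hx0.le]; congr 1; ring
      rw [this, ← div_eq_mul_inv, one_le_div (Real.rpow_pos_of_pos hx0 _)]
      exact Real.rpow_le_rpow hx0.le hx.2 (by linarith)
    have l2 : 1 ≤ rexp π * rexp (-π * (x ^ (-κ) / Y) ^ 2) := by
      rw [← Real.exp_add]
      apply Real.one_le_exp
      have h5 : x ^ (-κ) ≤ Y := by
        rw [hY, Real.rpow_neg hx0.le, Real.rpow_neg hV.le]
        exact inv_anti₀ (Real.rpow_pos_of_pos hV _) (Real.rpow_le_rpow hV.le hx.1 κp.le)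
      have h6 : (x ^ (-κ) / Y) ^ 2 ≤ 1 := by
        apply pow_le_one₀ (div_nonneg (Real.rpow_nonneg hx0.le _) Yp.le)
        rw [div_le_one Yp]; exact h5
      nlinarith [Real.pi_pos]
    have e1 : q * ((κ * x ^ (-κ - 1)) • g (x ^ (-κ))) = ‖Bsum k m1 j (x ^ (-κ))‖ ^ 4 *
        (((2 * V) ^ (κ + 1) * x ^ (-κ - 1)) * (rexp π * rexp (-π * (x ^ (-κ) / Y) ^ 2))) := by
      simp only [hq, hg, smul_eq_mul]; field_simp
    rw [e1]
    have := one_le_mul_of_one_le_of_one_le l1 l2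
    exact le_mul_of_one_le_right (by positivity) this
  have hIcc : Set.Ioc V (2 * V) ⊆ Set.Ioi 0 := fun x hx => hV.trans hx.1
  have h4 : ∫ x in V..(2 * V), ‖Bsum k m1 j (x ^ (-κ))‖ ^ 4 ≤
      ∫ x in V..(2 * V), q * ((κ * x ^ (-κ - 1)) • g (x ^ (-κ))) := by
    refine intervalIntegral.integral_mono_on (by linarith)
      (Bsum_contOn k m1 j (-κ) V hV).intervalIntegrable ?_ hpt
    rw [intervalIntegrable_iff_integrableOn_Ioc_of_le (by linarith)]
    exact (h2.mono_set hIcc).const_mul q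
  have h5 : ∫ x in V..(2 * V), q * ((κ * x ^ (-κ - 1)) • g (x ^ (-κ))) ≤ q * ∫ y in Set.Ioi 0, g y := by
    rw [intervalIntegral.integral_const_mul, intervalIntegral.integral_of_le (by linarith), ← h1]
    apply mul_le_mul_of_nonneg_left _ hqp.le
    refine setIntegral_mono_set h2 ?_ hIcc.eventuallyLE
    filter_upwards [ae_restrict_mem measurableSet_Ioi] with x hx
    have : 0 < x ^ (-κ - 1) := Real.rpow_pos_of_pos hx _
    have := hg0 (x ^ (-κ))
    simp only [Pi.zero_apply, smul_eq_mul]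
    positivity
  have hqY : q * Y = rexp π * 2 ^ (κ + 1) * (k - 1) * V := by
    rw [hq, hY, Real.mul_rpow (by norm_num) hV.le]
    have : V ^ (κ + 1) * V ^ (-κ) = V := by
      rw [← Real.rpow_add hV]; simp
    calc rexp π * (2 ^ (κ + 1) * V ^ (κ + 1)) / κ * V ^ (-κ)
        = rexp π * 2 ^ (κ + 1) * (V ^ (κ + 1) * V ^ (-κ)) / κ := by ring
      _ = _ := by rw [this, hκ]; field_simp
  calc _ ≤ q * ∫ y in Set.Ioi 0, g y := h4.trans h5
    _ ≤ q * (Y * Q4 S (fun _ => 1) (fun m => (m : ℝ) ^ (k / (k - 1))) (cc * Y)) := by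
      gcongr; exact h3.trans hgle
    _ = _ := by rw [← mul_assoc, hqY]

lemma Bsum_RS {γ : ℝ} (hRS : RS γ) (k : ℝ) (hk : 1 < k) (A B : ℝ) (hA : 0 < A)
    (hAB : A < B) :
    ∃ C > 0, ∀ N > 0, ∀ t > 0, ∀ j ≤ ⌊4 * k * B ^ (k - 1) * t / N⌋₊,
      ∫ x in (t / N ^ k)..(2 * (t / N ^ k)),
        ‖Bsum k ⌈k * A ^ (k - 1) / 2 * t / N⌉₊ j (x ^ (-(1 / (k - 1))))‖ ^ 4 ≤
      C * (t / N ^ k) * (1 + (t / N) ^ 4 / t + (t / N) ^ (2 + γ)) := by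
  have hB : 0 < B := hA.trans hAB
  have hk0 : 0 < k := by linarith
  have hk1 : 0 < k - 1 := by linarith
  have hAk := Real.rpow_pos_of_pos hA (k - 1)
  have hBk := Real.rpow_pos_of_pos hB (k - 1)
  have hABk : A ^ (k - 1) ≤ B ^ (k - 1) := Real.rpow_le_rpow hA.le hAB.le hk1.le
  set c1 := k * A ^ (k - 1) / 2 with hc1
  set c2 := 4 * k * B ^ (k - 1) with hc2
  have c1p : 0 < c1 := by positivity
  have c2p : 0 < c2 := by positivity
  have c12 : c1 < c2 := by rw [hc1, hc2]; nlinarith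
  set κ := 1 / (k - 1) with hκ
  have κp : 0 < κ := by positivity
  set k' := k / (k - 1) with hk'
  have hk'1 : 1 < k' := by rw [hk', one_lt_div hk1]; linarith
  have hk'e : k' = 1 + κ := by rw [hk', hκ]; field_simp; ring
  set cc := (k - 1) * k ^ (-k') with hcc
  have ccp : 0 < cc := mul_pos hk1 (Real.rpow_pos_of_pos hk0 _)
  obtain ⟨C, hC, hR⟩ := hRS k' hk'1 c1 c2 c1p c12
  set E := rexp π * 2 ^ (κ + 1) * (k - 1) with hE
  have Ep : 0 < E := by
    have : (0:ℝ) < 2 ^ (κ + 1) := Real.rpow_pos_of_pos (by norm_num) _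
    positivity
  refine ⟨E * C * (1 / cc + 1) + c2 ^ 4, by positivity, ?_⟩
  intro N hN t ht j hj
  set V := t / N ^ k with hV
  have hNk := Real.rpow_pos_of_pos hN k
  have Vp : 0 < V := by positivity
  set M := t / N with hM
  have Mp : 0 < M := by positivity
  have Mγ := Real.rpow_pos_of_pos Mp (2 + γ)
  have hm1pos : 0 < ⌈c1 * t / N⌉₊ := Nat.ceil_pos.2 (by positivity)
  set m1 := ⌈c1 * t / N⌉₊ with hm1
  have hjM : (j : ℝ) ≤ c2 * M := by
    have := (Nat.le_floor_iff (by positivity)).1 hj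
    rwa [mul_div_assoc] at this
  rcases le_or_gt 1 M with h1 | h1
  · have hI := Bsum_int k hk V Vp m1 j
    rw [← hκ, ← hk', ← hcc, ← hE] at hI
    have hV2 : cc * V ^ (-κ) = (cc * t) / M ^ k' := by
      rw [hV, hM, Real.rpow_neg (by positivity), Real.div_rpow ht.le hNk.le,
        Real.div_rpow ht.le hN.le, ← Real.rpow_mul hN.le]
      have e1 : k * κ = k' := by rw [hκ, hk']; ring
      have e2 : t ^ k' = t * t ^ κ := by rw [hk'e, Real.rpow_add ht, Real.rpow_one]
      rw [e1, e2]
      have := Real.rpow_pos_of_pos ht κ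
      have := Real.rpow_pos_of_pos hN k'
      field_simp
    rw [hV2] at hI
    have hQ := hR M h1 (cc * t) (by positivity) (Finset.Icc m1 j) (by
      intro n hn
      rw [Finset.mem_Icc] at hn
      constructor
      · have := Nat.ceil_le.1 hn.1
        rwa [mul_div_assoc] at this
      · exact le_trans (by exact_mod_cast hn.2) hjM)
    refine hI.trans ?_
    calc E * V * Q4 (Finset.Icc m1 j) (fun _ => 1) (fun m => (m:ℝ) ^ k') (cc * t / M ^ k')
        ≤ E * V * (C * (M ^ 4 / (cc * t) + M ^ (2 + γ))) := by gcongr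
      _ = E * C * V * (1 / cc * (M ^ 4 / t) + 1 * M ^ (2 + γ)) := by field_simp
      _ ≤ E * C * V * ((1 / cc + 1) * (M ^ 4 / t) + (1 / cc + 1) * M ^ (2 + γ)) := by
          have : 0 < 1 / cc := by positivity
          gcongr <;> linarith
      _ = (E * C * (1 / cc + 1)) * V * (M ^ 4 / t + M ^ (2 + γ)) := by ring
      _ ≤ _ := by
          have : 0 < c2 ^ 4 := by positivity
          gcongr
          · linarith
          · linarith
  · have hb : ∀ y, ‖Bsum k m1 j y‖ ^ 4 ≤ c2 ^ 4 := by
      intro y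
      apply pow_le_pow_left₀ (norm_nonneg _)
      unfold Bsum
      refine (norm_sum_le _ _).trans ?_
      simp only [norm_e, Finset.sum_const, Nat.card_Icc, nsmul_eq_mul, mul_one]
      have : ((j + 1 - m1 : ℕ) : ℝ) ≤ j := by exact_mod_cast (by lia)
      refine this.trans (hjM.trans ?_)
      nlinarith
    have h2 : ∫ x in V..(2 * V), ‖Bsum k m1 j (x ^ (-κ))‖ ^ 4 ≤ ∫ x in V..(2 * V), c2 ^ 4 :=
      intervalIntegral.integral_mono_on (by linarith)
        (Bsum_contOn k m1 j (-κ) V Vp).intervalIntegrable intervalIntegrable_const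
        (fun x _ => hb _)
    refine h2.trans ?_
    rw [intervalIntegral.integral_const, smul_eq_mul]
    have e1 : (2 * V - V) * c2 ^ 4 = c2 ^ 4 * V * 1 := by ring
    rw [e1]
    have : 0 < E * C * (1 / cc + 1) := by positivity
    have h3 : 0 ≤ M ^ 4 / t := by positivity
    gcongr
    · linarith
    · linarith


lemma sum_pow_four (s : Finset ℕ) (d β : ℕ → ℝ) (hd : ∀ j, 0 ≤ d j) (hβ : ∀ j, 0 ≤ β j) :
    (∑ j ∈ s, d j * β j) ^ 4 ≤ (∑ j ∈ s, d j) ^ 3 * ∑ j ∈ s, d j * β j ^ 4 := by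
  have h1 : (∑ j ∈ s, d j * β j) ^ 2 ≤ (∑ j ∈ s, d j) * ∑ j ∈ s, d j * β j ^ 2 :=
    Finset.sum_sq_le_sum_mul_sum_of_sq_le_mul s (fun i _ => hd i)
      (fun i _ => mul_nonneg (hd i) (by positivity)) (fun i _ => le_of_eq (by ring))
  have h2 : (∑ j ∈ s, d j * β j ^ 2) ^ 2 ≤ (∑ j ∈ s, d j) * ∑ j ∈ s, d j * β j ^ 4 :=
    Finset.sum_sq_le_sum_mul_sum_of_sq_le_mul s (fun i _ => hd i)
      (fun i _ => mul_nonneg (hd i) (by positivity)) (fun i _ => le_of_eq (by ring))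
  have hD : 0 ≤ ∑ j ∈ s, d j := Finset.sum_nonneg fun i _ => hd i
  calc (∑ j ∈ s, d j * β j) ^ 4 = ((∑ j ∈ s, d j * β j) ^ 2) ^ 2 := by ring
    _ ≤ ((∑ j ∈ s, d j) * ∑ j ∈ s, d j * β j ^ 2) ^ 2 := pow_le_pow_left₀ (by positivity) h1 2
    _ = (∑ j ∈ s, d j) ^ 2 * (∑ j ∈ s, d j * β j ^ 2) ^ 2 := by ring
    _ ≤ (∑ j ∈ s, d j) ^ 2 * ((∑ j ∈ s, d j) * ∑ j ∈ s, d j * β j ^ 4) := by gcongr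
    _ = _ := by ring

lemma continuous_Gsum (w : ℝ → ℝ) (B N k : ℝ) : Continuous (Gsum w B N k) := by
  unfold Gsum
  exact continuous_finsetSum _ fun m _ =>
    continuous_const.mul (continuous_e.comp (continuous_id.mul continuous_const))

lemma piece {γ : ℝ} (hRS : RS γ) {w w1 w2 : ℝ → ℝ} {A B W : ℝ} (hw : Wt w w1 w2 A B W)
    (k : ℝ) (hk : 1 < k) :
    ∃ C > 0, ∀ N ≥ (1:ℝ), ∀ t ≥ (1/2:ℝ),
      ∫ x in (t / N ^ k)..(2 * (t / N ^ k)), ‖Gsum w B N k x‖ ^ 4 ≤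
        C * (t / N ^ k) * (N ^ 4 / t ^ 2 + t + N ^ (2 - γ) * t ^ γ) := by
  obtain ⟨C1, hC1, h1⟩ := poisson_main hw k hk
  obtain ⟨C2, hC2, h2⟩ := stat_bound hw k hk
  obtain ⟨C3, hC3, h3⟩ := Bsum_RS hRS k hk A B hw.hA hw.hAB
  refine ⟨8 * (C2 ^ 4 * C3 + C1 ^ 4 * 520), by positivity, ?_⟩
  intro N hN1 t ht2
  have hN : 0 < N := by linarith
  have ht : 0 < t := by linarith
  obtain ⟨d, hd, hdS, hdB⟩ := h2 N hN t ht
  have h1' := h1 N hN t ht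
  have h3' := h3 N hN t ht
  set m1 := ⌈k * A ^ (k - 1) / 2 * t / N⌉₊
  set m2 := ⌊4 * k * B ^ (k - 1) * t / N⌋₊
  set κ := 1 / (k - 1)
  set V := t / N ^ k with hV
  have hNk := Real.rpow_pos_of_pos hN k
  have Vp : 0 < V := by positivity
  set M := t / N with hM
  have Mp : 0 < M := by positivity
  set D := ∑ j ∈ Finset.Icc m1 m2, d j with hD
  have hD0 : 0 ≤ D := Finset.sum_nonneg fun i _ => hd i
  set err := C1 * (N / t ^ 2 + 1 / N) with herr
  have herr0 : 0 ≤ err := by positivity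
  have hpt : ∀ x ∈ Set.Icc V (2 * V), ‖Gsum w B N k x‖ ^ 4 ≤
      8 * (N ^ 4 * (D ^ 3 * ∑ j ∈ Finset.Icc m1 m2, d j * ‖Bsum k m1 j (x ^ (-κ))‖ ^ 4) + err ^ 4) := by
    intro x hx
    have hx0 : 0 < x := Vp.trans_le hx.1
    have l1 : t ≤ x * N ^ k := by
      have := hx.1; rwa [hV, div_le_iff₀ hNk] at this
    have l2 : x * N ^ k ≤ 2 * t := by
      have := hx.2; rwa [hV, ← mul_div_assoc, le_div_iff₀ hNk] at this
    have g1 := h1' x hx0 l1 l2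
    have g2 := hdB x hx0 l1 l2
    set Z0 := ∑ m ∈ Finset.Icc m1 m2, Iint w A B k (x * N ^ k) (m * N)
    have g3 : ‖Gsum w B N k x‖ ≤ N * ‖Z0‖ + err := by
      have := norm_add_le ((N : ℂ) * Z0) (Gsum w B N k x - N * Z0)
      rw [add_sub_cancel, norm_mul, Complex.norm_real, Real.norm_eq_abs, abs_of_pos hN] at this
      linarith
    have g4 : ‖Z0‖ ^ 4 ≤ D ^ 3 * ∑ j ∈ Finset.Icc m1 m2, d j * ‖Bsum k m1 j (x ^ (-κ))‖ ^ 4 :=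
      (pow_le_pow_left₀ (norm_nonneg _) g2 4).trans
        (sum_pow_four _ d (fun j => ‖Bsum k m1 j (x ^ (-κ))‖) hd (fun j => norm_nonneg _))
    calc ‖Gsum w B N k x‖ ^ 4 ≤ (N * ‖Z0‖ + err) ^ 4 := pow_le_pow_left₀ (norm_nonneg _) g3 4
      _ ≤ 2 ^ (4 - 1) * ((N * ‖Z0‖) ^ 4 + err ^ 4) := add_pow_le (by positivity) herr0 4
      _ = 8 * (N ^ 4 * ‖Z0‖ ^ 4 + err ^ 4) := by norm_num; ring
      _ ≤ _ := by gcongr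
  set K := C3 * V * (1 + M ^ 4 / t + M ^ (2 + γ)) with hK
  have hBi : ∀ j, IntervalIntegrable (fun x : ℝ => ‖Bsum k m1 j (x ^ (-κ))‖ ^ 4) volume V (2 * V) :=
    fun j => (Bsum_contOn k m1 j (-κ) V Vp).intervalIntegrable
  have hSi : IntervalIntegrable (fun x : ℝ => ∑ j ∈ Finset.Icc m1 m2, d j *
      ‖Bsum k m1 j (x ^ (-κ))‖ ^ 4) volume V (2 * V) := by
    apply ContinuousOn.intervalIntegrable
    exact continuousOn_finsetSum _ fun j _ => (Bsum_contOn k m1 j (-κ) V Vp).const_mul _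
  have hInt := intervalIntegral.integral_mono_on (by linarith : V ≤ 2 * V)
    (((continuous_Gsum w B N k).norm.pow 4).intervalIntegrable _ _)
    ((((hSi.const_mul (D ^ 3)).const_mul (N ^ 4)).add intervalIntegrable_const).const_mul 8) hpt
  refine hInt.trans ?_
  rw [intervalIntegral.integral_const_mul, intervalIntegral.integral_add
    ((hSi.const_mul (D ^ 3)).const_mul (N ^ 4)) intervalIntegrable_const,
    intervalIntegral.integral_const_mul, intervalIntegral.integral_const_mul,
    intervalIntegral.integral_finsetSum (fun j _ => (hBi j).const_mul _),
    intervalIntegral.integral_const, smul_eq_mul]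
  have hsumK : ∑ j ∈ Finset.Icc m1 m2, ∫ x in V..(2 * V), d j * ‖Bsum k m1 j (x ^ (-κ))‖ ^ 4 ≤
      D * K := by
    rw [hD, Finset.sum_mul]
    refine Finset.sum_le_sum fun j hj => ?_
    rw [intervalIntegral.integral_const_mul]
    exact mul_le_mul_of_nonneg_left (h3' j (Finset.mem_Icc.1 hj).2) (hd j)
  have Mγ := Real.rpow_pos_of_pos Mp (2 + γ)
  have hK0 : 0 ≤ K := by positivity
  have hst : 0 < √t := by positivity
  have hD4 : D ^ 4 ≤ C2 ^ 4 / t ^ 2 := by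
    have := pow_le_pow_left₀ hD0 hdS 4
    rw [div_pow] at this
    have e4 : √t ^ 4 = t ^ 2 := by
      rw [show (4:ℕ) = 2 * 2 by norm_num, pow_mul, Real.sq_sqrt ht.le]
    rwa [e4] at this
  set P := N ^ (2 - γ) * t ^ γ with hP
  have hP0 : 0 < P := mul_pos (Real.rpow_pos_of_pos hN _) (Real.rpow_pos_of_pos ht _)
  have hMN : N ^ 4 / t ^ 2 * (1 + M ^ 4 / t + M ^ (2 + γ)) = N ^ 4 / t ^ 2 + t + P := by
    have e1 : M ^ (2 + γ) = t ^ 2 / N ^ 4 * P := by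
      rw [hM, hP, Real.div_rpow ht.le hN.le, Real.rpow_add ht, Real.rpow_add hN, Real.rpow_sub hN,
        Real.rpow_two, Real.rpow_two]
      have := Real.rpow_pos_of_pos hN γ
      field_simp
    rw [e1, hM]
    field_simp
  have hmain : N ^ 4 * (D ^ 3 * ∑ j ∈ Finset.Icc m1 m2, ∫ x in V..(2 * V),
      d j * ‖Bsum k m1 j (x ^ (-κ))‖ ^ 4) ≤ C2 ^ 4 * C3 * V * (N ^ 4 / t ^ 2 + t + P) := by
    calc _ ≤ N ^ 4 * (D ^ 3 * (D * K)) := by gcongr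
      _ = N ^ 4 * D ^ 4 * K := by ring
      _ ≤ N ^ 4 * (C2 ^ 4 / t ^ 2) * K := by gcongr
      _ = C2 ^ 4 * C3 * V * (N ^ 4 / t ^ 2 * (1 + M ^ 4 / t + M ^ (2 + γ))) := by rw [hK]; ring
      _ = _ := by rw [hMN]
  have herr4 : (2 * V - V) * err ^ 4 ≤ C1 ^ 4 * 520 * V * (N ^ 4 / t ^ 2 + t + P) := by
    have h6 : (N / t ^ 2 + 1 / N) ^ 4 ≤ 520 * (N ^ 4 / t ^ 2 + t + P) := by
      have a1 := add_pow_le (by positivity : 0 ≤ N / t ^ 2) (by positivity : 0 ≤ 1 / N) 4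
      have a2 : (N / t ^ 2) ^ 4 ≤ 64 * (N ^ 4 / t ^ 2) := by
        have h64 : 1 ≤ 64 * t ^ 6 := by
          have := pow_le_pow_left₀ (by norm_num : (0:ℝ) ≤ 1/2) ht2 6
          norm_num at this; linarith
        calc (N / t ^ 2) ^ 4 = (N ^ 4 / t ^ 8) * 1 := by field_simp
          _ ≤ (N ^ 4 / t ^ 8) * (64 * t ^ 6) := by gcongr
          _ = _ := by field_simp
      have a3 : (1 / N) ^ 4 ≤ 1 := pow_le_one₀ (by positivity) (by rw [div_le_one hN]; exact hN1)
      have a4 : 0 < N ^ 4 / t ^ 2 := by positivity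
      norm_num at a1
      have a5 : (1 / N) ^ 4 = (N ^ 4)⁻¹ := by rw [one_div, inv_pow]
      rw [a5] at a3
      simp only [one_div]
      linarith
    calc (2 * V - V) * err ^ 4 = C1 ^ 4 * V * (N / t ^ 2 + 1 / N) ^ 4 := by rw [herr]; ring
      _ ≤ C1 ^ 4 * V * (520 * (N ^ 4 / t ^ 2 + t + P)) := by gcongr
      _ = _ := by ring
  calc 8 * (_ + _) ≤ 8 * (C2 ^ 4 * C3 * V * (N ^ 4 / t ^ 2 + t + P) +
      C1 ^ 4 * 520 * V * (N ^ 4 / t ^ 2 + t + P)) := by gcongr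
    _ = _ := by ring


lemma Gsum_trivial {w w1 w2 : ℝ → ℝ} {A B W : ℝ} (hw : Wt w w1 w2 A B W) (k : ℝ) :
    ∃ C > 0, ∀ N ≥ (1:ℝ), ∀ x, ‖Gsum w B N k x‖ ≤ C * N := by
  have hB : 0 < B := hw.hA.trans hw.hAB
  refine ⟨(|W| + 1) * (B + 1), by positivity, fun N hN x => ?_⟩
  unfold Gsum
  have hN0 : 0 < N := by linarith
  calc _ ≤ ∑ n ∈ Finset.range (⌊B * N⌋₊ + 1), (|W| + 1) := by
        refine norm_sum_le_of_le _ fun n _ => ?_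
        rw [norm_mul, norm_e, mul_one, Complex.norm_real, Real.norm_eq_abs]
        have := hw.b0 ((n:ℝ) / N)
        linarith [le_abs_self W]
    _ = (⌊B * N⌋₊ + 1) * (|W| + 1) := by
        rw [Finset.sum_const, Finset.card_range, nsmul_eq_mul]; push_cast; ring
    _ ≤ (B * N + N) * (|W| + 1) := by
        gcongr
        exact Nat.floor_le (by positivity)
    _ = _ := by ring

lemma cumulative {γ : ℝ} (hγ : 0 < γ) (hRS : RS γ) {w w1 w2 : ℝ → ℝ} {A B W : ℝ}
    (hw : Wt w w1 w2 A B W) (k : ℝ) (hk : 1 < k) :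
    ∃ C > 0, ∀ N ≥ (1:ℝ), ∀ T ≥ (1/2:ℝ),
      ∫ x in (0:ℝ)..(T / N ^ k), ‖Gsum w B N k x‖ ^ 4 ≤
        C / N ^ k * (N ^ 4 * (3 - 1 / T) + T ^ 2 + N ^ (2 - γ) * T ^ (1 + γ)) := by
  obtain ⟨C0, hC0, h0⟩ := Gsum_trivial hw k
  obtain ⟨C1, hC1, h1⟩ := piece hRS hw k hk
  refine ⟨C0 ^ 4 + C1 * 2, by positivity, ?_⟩
  intro N hN
  have hN0 : 0 < N := by linarith
  have hNk := Real.rpow_pos_of_pos hN0 k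
  have hNg := Real.rpow_pos_of_pos hN0 (2 - γ)
  have key : ∀ j : ℕ, ∀ T : ℝ, 1/2 ≤ T → T ≤ 2 ^ j →
      ∫ x in (0:ℝ)..(T / N ^ k), ‖Gsum w B N k x‖ ^ 4 ≤
        (C0 ^ 4 + C1 * 2) / N ^ k * (N ^ 4 * (3 - 1 / T) + T ^ 2 + N ^ (2 - γ) * T ^ (1 + γ)) := by
    have small : ∀ T : ℝ, 1/2 ≤ T → T ≤ 1 →
      ∫ x in (0:ℝ)..(T / N ^ k), ‖Gsum w B N k x‖ ^ 4 ≤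
        (C0 ^ 4 + C1 * 2) / N ^ k * (N ^ 4 * (3 - 1 / T) + T ^ 2 + N ^ (2 - γ) * T ^ (1 + γ)) := by
      intro T hT hT1
      have hT0 : 0 < T := by linarith
      have hTg := Real.rpow_pos_of_pos hT0 (1 + γ)
      have a1 : ∫ x in (0:ℝ)..(T / N ^ k), ‖Gsum w B N k x‖ ^ 4 ≤
          ∫ x in (0:ℝ)..(T / N ^ k), (C0 * N) ^ 4 := by
        refine intervalIntegral.integral_mono_on (by positivity)
          (((continuous_Gsum w B N k).norm.pow 4).intervalIntegrable _ _)
          intervalIntegrable_const fun x _ => ?_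
        exact pow_le_pow_left₀ (norm_nonneg _) (h0 N hN x) 4
      rw [intervalIntegral.integral_const, smul_eq_mul, sub_zero] at a1
      refine a1.trans ?_
      have a2 : 1 / T ≤ 2 := by rw [div_le_iff₀ hT0]; linarith
      calc T / N ^ k * (C0 * N) ^ 4 = C0 ^ 4 / N ^ k * (N ^ 4 * T) := by ring
        _ ≤ (C0 ^ 4 + C1 * 2) / N ^ k * (N ^ 4 * (3 - 1 / T) + T ^ 2 + N ^ (2 - γ) * T ^ (1 + γ)) := by
          have a3 : N ^ 4 * T ≤ N ^ 4 * (3 - 1 / T) :=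
            mul_le_mul_of_nonneg_left (by linarith) (by positivity)
          have a4 : 0 < N ^ (2 - γ) * T ^ (1 + γ) := by positivity
          apply mul_le_mul
          · gcongr; linarith
          · linarith [sq_nonneg T]
          · positivity
          · positivity
    intro j
    induction j with
    | zero => intro T hT hT1; exact small T hT (by simpa using hT1)
    | succ j ih =>
      intro T hT hTj
      by_cases hT1 : T ≤ 1
      · exact small T hT hT1
      push Not at hT1
      obtain ⟨t, rfl⟩ : ∃ t, T = 2 * t := ⟨T / 2, by ring⟩
      have ht : 1 / 2 ≤ t := by linarith
      have ht0 : 0 < t := by linarith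
      have i1 := ih t ht (by rw [pow_succ] at hTj; linarith)
      have i2 := h1 N hN t ht
      have hii : ∀ a b : ℝ, IntervalIntegrable (fun x => ‖Gsum w B N k x‖ ^ 4) volume a b :=
        fun a b => ((continuous_Gsum w B N k).norm.pow 4).intervalIntegrable _ _
      rw [← intervalIntegral.integral_add_adjacent_intervals (hii 0 (t / N ^ k)) (hii _ _),
        mul_div_assoc]
      refine (add_le_add i1 i2).trans ?_
      have htg := Real.rpow_pos_of_pos ht0 γ
      have e1 : t ^ (1 + γ) = t * t ^ γ := by rw [Real.rpow_add ht0, Real.rpow_one]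
      have e2 : (2 * t) ^ (1 + γ) = 2 * 2 ^ γ * t * t ^ γ := by
        rw [Real.mul_rpow (by norm_num) ht0.le, e1, Real.rpow_add (by norm_num), Real.rpow_one]
        ring
      have e3 : (1:ℝ) ≤ 2 ^ γ := Real.one_le_rpow (by norm_num) hγ.le
      rw [e1, e2]
      set D := C0 ^ 4 + C1 * 2
      have hD : C1 * 2 ≤ D := by simp only [D]; linarith [pow_pos hC0 4]
      have s1 : N ^ 4 / t + t ^ 2 + N ^ (2 - γ) * (t * t ^ γ) ≤
          2 * ((N ^ 4 * (3 - 1 / (2 * t)) + (2 * t) ^ 2 + N ^ (2 - γ) * (2 * 2 ^ γ * t * t ^ γ)) -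
          (N ^ 4 * (3 - 1 / t) + t ^ 2 + N ^ (2 - γ) * (t * t ^ γ))) := by
        have q : N ^ (2 - γ) * (t * t ^ γ) ≤ N ^ (2 - γ) * (t * t ^ γ) * 2 ^ γ :=
          le_mul_of_one_le_right (by positivity) e3
        have q2 : N ^ 4 * (3 - 1 / (2 * t)) - N ^ 4 * (3 - 1 / t) = N ^ 4 / t / 2 := by
          field_simp; ring
        have q3 := sq_nonneg t
        have q4 : 0 ≤ N ^ (2 - γ) * (t * t ^ γ) := by positivity
        nlinarith
      have s0 : 0 ≤ N ^ 4 / t + t ^ 2 + N ^ (2 - γ) * (t * t ^ γ) := by positivity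
      have s2 : C1 * (t / N ^ k) * (N ^ 4 / t ^ 2 + t + N ^ (2 - γ) * t ^ γ) =
          (C1 / N ^ k) * (N ^ 4 / t + t ^ 2 + N ^ (2 - γ) * (t * t ^ γ)) := by
        field_simp
      rw [s2]
      have s3 : (C1 / N ^ k) * (N ^ 4 / t + t ^ 2 + N ^ (2 - γ) * (t * t ^ γ)) ≤
        D / N ^ k * ((N ^ 4 * (3 - 1 / (2 * t)) + (2 * t) ^ 2 + N ^ (2 - γ) * (2 * 2 ^ γ * t * t ^ γ)) -
          (N ^ 4 * (3 - 1 / t) + t ^ 2 + N ^ (2 - γ) * (t * t ^ γ))) := by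
        have : C1 / N ^ k ≤ D / N ^ k / 2 := by
          rw [div_div, mul_comm (N ^ k) 2, ← div_div]; gcongr; linarith
        calc _ ≤ D / N ^ k / 2 * (N ^ 4 / t + t ^ 2 + N ^ (2 - γ) * (t * t ^ γ)) := by gcongr
          _ ≤ D / N ^ k / 2 * _ := mul_le_mul_of_nonneg_left s1 (by positivity)
          _ = _ := by ring
      linarith
  intro T hT
  obtain ⟨j, hj⟩ := pow_unbounded_of_one_lt T (by norm_num : (1:ℝ) < 2)
  exact key j T hT hj.le

lemma Q4_trivial (a b : ℝ) (ha : 0 < a) (hab : a < b) : ∃ C > 0, ∀ N ≥ (1:ℝ), ∀ S : Finset ℕ,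
    (∀ n ∈ S, a * N ≤ n ∧ (n:ℝ) ≤ b * N) → ∀ ω : ℕ → ℝ, ∀ U,
    Q4 S (fun _ => 1) ω U ≤ C * N ^ 4 := by
  have hb : 0 < b := ha.trans hab
  refine ⟨(b + 1) ^ 4, by positivity, fun N hN S hS ω U => ?_⟩
  have hN0 : 0 < N := by linarith
  refine (Q4_le_card S ω U).trans ?_
  have h1 : S ⊆ Finset.range (⌊b * N⌋₊ + 1) := fun n hn =>
    Finset.mem_range.2 (Nat.lt_succ_of_le (Nat.le_floor (hS n hn).2))
  have h2 : (S.card : ℝ) ≤ ⌊b * N⌋₊ + 1 := by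
    have := Finset.card_le_card h1
    rw [Finset.card_range] at this
    exact_mod_cast this
  have h3 : (⌊b * N⌋₊ : ℝ) ≤ b * N := Nat.floor_le (by positivity)
  rw [← mul_pow]
  exact pow_le_pow_left₀ (by positivity) (by linarith) 4

lemma RS_two : RS 2 := by
  intro k hk a b ha hab
  obtain ⟨C, hC, h⟩ := Q4_trivial a b ha hab
  refine ⟨C, hC, fun N hN T hT S hS => (h N hN S hS _ _).trans ?_⟩
  have hN0 : 0 < N := by linarith
  gcongr
  rw [show (2:ℝ) + 2 = (4:ℕ) by norm_num, Real.rpow_natCast]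
  have : 0 ≤ N ^ 4 / T := by positivity
  linarith

lemma RS_step {γ : ℝ} (hγ : 0 < γ) (hRS : RS γ) : RS (γ / (1 + γ)) := by
  intro k hk a b ha hab
  obtain ⟨C0, hC0, h0⟩ := Q4_trivial a b ha hab
  obtain ⟨w, w1, w2, A, B, W, hw, hw1⟩ := exists_Wt a b ha hab
  obtain ⟨C1, hC1, h1⟩ := cumulative hγ hRS hw k hk
  have hB : 0 < B := hw.hA.trans hw.hAB
  have hbB : b ≤ B := by
    by_contra hc
    push Not at hc
    have i1 := hw1 b ⟨hab.le, le_rfl⟩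
    have i2 := hw.z0 b (Or.inr hc.le)
    linarith
  have main : ∀ N ≥ (1:ℝ), ∀ T ≥ (1/2:ℝ), ∀ S : Finset ℕ,
      (∀ n ∈ S, a * N ≤ n ∧ (n:ℝ) ≤ b * N) →
      Q4 S (fun _ => 1) (fun n => (n:ℝ) ^ k) (T / N ^ k) ≤
        12 * C1 * (N ^ 4 / T + T + N ^ (2 - γ) * T ^ γ) := by
    intro N hN T hT S hS
    have hN0 : 0 < N := by linarith
    have hT0 : 0 < T := by linarith
    have hNk := Real.rpow_pos_of_pos hN0 k
    have hNg := Real.rpow_pos_of_pos hN0 (2 - γ)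
    have hTg := Real.rpow_pos_of_pos hT0 γ
    have hU : 0 < T / N ^ k := by positivity
    have hsub : S ⊆ Finset.range (⌊B * N⌋₊ + 1) := fun n hn =>
      Finset.mem_range.2 (Nat.lt_succ_of_le (Nat.le_floor ((hS n hn).2.trans (by gcongr))))
    have q1 : Q4 S (fun _ => 1) (fun n => (n:ℝ) ^ k) (T / N ^ k) ≤
        Q4 (Finset.range (⌊B * N⌋₊ + 1)) (fun n => w ((n:ℝ) / N)) (fun n => (n:ℝ) ^ k) (T / N ^ k) := by
      refine Q4_mono S _ hsub _ _ _ ?_ ?_ ?_ _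
      · intros; norm_num
      · intros; exact hw.nn _
      · intro n hn
        obtain ⟨u, v⟩ := hS n hn
        rw [hw1 _ ⟨by rw [le_div_iff₀ hN0]; exact u, by rw [div_le_iff₀ hN0]; exact v⟩]
    have q2 := Q4_le_trunc (Finset.range (⌊B * N⌋₊ + 1)) (fun n => w ((n:ℝ) / N))
      (fun n => (n:ℝ) ^ k) (fun _ _ => hw.nn _) hU
    have q3 := h1 N hN T hT
    have q4 : 4 / (T / N ^ k) * ∫ x in (0:ℝ)..(T / N ^ k), ‖Gsum w B N k x‖ ^ 4 ≤
      4 / (T / N ^ k) * (C1 / N ^ k * (N ^ 4 * (3 - 1 / T) + T ^ 2 + N ^ (2 - γ) * T ^ (1 + γ))) := by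
      gcongr
    refine q1.trans (q2.trans (q4.trans ?_))
    have e1 : T ^ (1 + γ) = T * T ^ γ := by rw [Real.rpow_add hT0, Real.rpow_one]
    rw [e1]
    calc _ = 4 * C1 * (N ^ 4 / T * (3 - 1 / T) + T + N ^ (2 - γ) * T ^ γ) := by
          field_simp
      _ ≤ 4 * C1 * (3 * (N ^ 4 / T) + T + N ^ (2 - γ) * T ^ γ) := by
          have z1 : 0 < N ^ 4 / T := by positivity
          have z2 : 0 < 1 / T := by positivity
          have : N ^ 4 / T * (3 - 1 / T) ≤ 3 * (N ^ 4 / T) := by nlinarith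
          gcongr
      _ ≤ _ := by
          have z3 : 0 < N ^ (2 - γ) * T ^ γ := by positivity
          have : 3 * (N ^ 4 / T) + T + N ^ (2 - γ) * T ^ γ ≤
            3 * (N ^ 4 / T + T + N ^ (2 - γ) * T ^ γ) := by linarith
          calc _ ≤ 4 * C1 * (3 * (N ^ 4 / T + T + N ^ (2 - γ) * T ^ γ)) := by gcongr
            _ = _ := by ring
  set τ := γ / (1 + γ) with hτ
  have hτ0 : 0 < τ := by positivity
  have hτ1 : τ < 1 := by rw [hτ, div_lt_one (by linarith)]; linarith
  have hτγ : γ * (1 - τ) = τ := by rw [hτ]; field_simp; ring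
  have mid : ∀ N ≥ (1:ℝ), ∀ T ≥ (1/2:ℝ), T ≤ N ^ (2 - τ) → ∀ S : Finset ℕ,
      (∀ n ∈ S, a * N ≤ n ∧ (n:ℝ) ≤ b * N) →
      Q4 S (fun _ => 1) (fun n => (n:ℝ) ^ k) (T / N ^ k) ≤
        12 * C1 * (N ^ 4 / T + 2 * N ^ (2 + τ)) := by
    intro N hN T hT hTN S hS
    have hN0 : 0 < N := by linarith
    have hT0 : 0 < T := by linarith
    refine (main N hN T hT S hS).trans ?_
    have b1 : T ≤ N ^ (2 + τ) :=
      hTN.trans (Real.rpow_le_rpow_of_exponent_le hN (by linarith))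
    have b2 : N ^ (2 - γ) * T ^ γ ≤ N ^ (2 + τ) := by
      have hNg := Real.rpow_pos_of_pos hN0 (2 - γ)
      calc N ^ (2 - γ) * T ^ γ ≤ N ^ (2 - γ) * (N ^ (2 - τ)) ^ γ := by gcongr
        _ = N ^ (2 + τ) := by
          rw [← Real.rpow_mul hN0.le, ← Real.rpow_add hN0]
          congr 1
          linarith
    exact mul_le_mul_of_nonneg_left (by linarith) (by positivity)
  refine ⟨C0 + 36 * C1, by positivity, ?_⟩
  intro N hN T hT S hS
  have hN0 : 0 < N := by linarith
  have hNk := Real.rpow_pos_of_pos hN0 k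
  have hNt := Real.rpow_pos_of_pos hN0 (2 + τ)
  have z1 : 0 < N ^ 4 / T := by positivity
  by_cases hT2 : T < 1 / 2
  · refine (h0 N hN S hS _ _).trans ?_
    have : N ^ 4 ≤ N ^ 4 / T := by
      rw [le_div_iff₀ hT]
      exact mul_le_of_le_one_right (by positivity) (by linarith)
    calc C0 * N ^ 4 ≤ C0 * (N ^ 4 / T + N ^ (2 + τ)) := by gcongr; linarith
      _ ≤ _ := by gcongr; linarith
  push Not at hT2
  by_cases hTN : T ≤ N ^ (2 - τ)
  · refine (mid N hN T hT2 hTN S hS).trans ?_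
    nlinarith [mul_pos hC1 z1, mul_pos hC1 hNt, mul_pos hC0 z1, mul_pos hC0 hNt]
  · push Not at hTN
    have hT1 : (1:ℝ) ≤ N ^ (2 - τ) := Real.one_le_rpow hN (by linarith)
    have := mid N hN (N ^ (2 - τ)) (by linarith) le_rfl S hS
    have e1 : N ^ 4 / N ^ (2 - τ) = N ^ (2 + τ) := by
      rw [← Real.rpow_natCast N 4, ← Real.rpow_sub hN0]
      congr 1
      push_cast; ring
    rw [e1] at this
    have an : Q4 S (fun _ => 1) (fun n => (n:ℝ) ^ k) (T / N ^ k) ≤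
        Q4 S (fun _ => 1) (fun n => (n:ℝ) ^ k) (N ^ (2 - τ) / N ^ k) :=
      Q4_anti S _ _ (fun _ _ => zero_le_one) (by positivity) (by gcongr)
    refine an.trans (this.trans ?_)
    nlinarith [mul_pos hC1 z1, mul_pos hC1 hNt, mul_pos hC0 z1, mul_pos hC0 hNt]

lemma RS_all (j : ℕ) : RS (2 / (2 * j + 1)) := by
  induction j with
  | zero => simpa using RS_two
  | succ j ih =>
    have := RS_step (by positivity) ih
    convert this using 1
    push_cast
    field_simp
    ring


lemma Keta_nonneg (η α : ℝ) : 0 ≤ Keta η α := sq_nonneg _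

lemma Keta_le_one (η α : ℝ) (hα : 0 < α) : Keta η α ≤ η ^ 2 := by
  unfold Keta
  have hp := Real.pi_pos
  rw [← sq_abs (Real.sin _ / _), ← sq_abs η]
  refine pow_le_pow_left₀ (abs_nonneg _) ?_ 2
  rw [abs_div, div_le_iff₀ (abs_pos.2 (by positivity)), ← abs_mul]
  refine (Real.abs_sin_le_abs).trans (le_of_eq ?_)
  congr 1; ring

lemma Keta_le_two (η α : ℝ) (hα : 0 < α) : α ^ 2 * Keta η α ≤ 1 := by
  unfold Keta
  have hp := Real.pi_gt_three
  rw [div_pow, mul_pow, ← mul_div_assoc, div_le_one (by positivity)]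
  have h1 : Real.sin (Real.pi * η * α) ^ 2 ≤ 1 := Real.sin_sq_le_one _
  have h2 : (1:ℝ) ≤ Real.pi ^ 2 := by nlinarith
  rw [mul_comm]
  exact mul_le_mul_of_nonneg_right (h1.trans h2) (sq_nonneg α)

lemma Keta_pointwise (η α : ℝ) (hη : 0 < η) (hα : 0 < α) (L : ℕ) (hL : η * α < L) :
    Keta η α ≤ ∑ n ∈ Finset.range L, 4 * Real.exp Real.pi * η ^ 2 / (1 + (n:ℝ)) ^ 2 *
      Real.exp (-Real.pi * ((α - n / η) / (1 / η)) ^ 2) := by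
  set n := ⌊η * α⌋₊ with hn
  have hηα : 0 ≤ η * α := by positivity
  have h1 : (n:ℝ) ≤ η * α := Nat.floor_le hηα
  have h2 : η * α < n + 1 := Nat.lt_floor_add_one _
  have hnL : n ∈ Finset.range L := by
    rw [Finset.mem_range]
    exact_mod_cast h1.trans_lt hL
  refine le_trans ?_ (Finset.single_le_sum (f := fun n : ℕ => 4 * Real.exp Real.pi * η ^ 2 / (1 + (n:ℝ)) ^ 2 *
      Real.exp (-Real.pi * ((α - n / η) / (1 / η)) ^ 2)) (fun i _ => by positivity) hnL)
  show Keta η α ≤ 4 * Real.exp Real.pi * η ^ 2 / (1 + (n:ℝ)) ^ 2 *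
      Real.exp (-Real.pi * ((α - n / η) / (1 / η)) ^ 2)
  have e1 : (α - n / η) / (1 / η) = η * α - n := by field_simp
  rw [e1]
  have h3 : 1 ≤ Real.exp Real.pi * Real.exp (-Real.pi * (η * α - n) ^ 2) := by
    rw [← Real.exp_add]
    apply Real.one_le_exp
    have : (η * α - n) ^ 2 ≤ 1 := by nlinarith
    nlinarith [Real.pi_pos]
  have h4 : Keta η α ≤ 4 * η ^ 2 / (1 + (n:ℝ)) ^ 2 := by
    rw [le_div_iff₀ (by positivity)]
    have k0 := Keta_nonneg η α
    have k1 := Keta_le_one η α hα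
    have k2 := Keta_le_two η α hα
    have h5 : (1 + (n:ℝ)) ^ 2 ≤ 2 + 2 * (η ^ 2 * α ^ 2) := by
      have : (1 + (n:ℝ)) ^ 2 ≤ (1 + η * α) ^ 2 := by gcongr
      nlinarith [sq_nonneg (1 - η * α)]
    calc Keta η α * (1 + (n:ℝ)) ^ 2 ≤ Keta η α * (2 + 2 * (η ^ 2 * α ^ 2)) := by gcongr
      _ = 2 * Keta η α + 2 * η ^ 2 * (α ^ 2 * Keta η α) := by ring
      _ ≤ 2 * η ^ 2 + 2 * η ^ 2 * 1 := by gcongr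
      _ = _ := by ring
  calc Keta η α ≤ 4 * η ^ 2 / (1 + (n:ℝ)) ^ 2 * 1 := by rw [mul_one]; exact h4
    _ ≤ 4 * η ^ 2 / (1 + (n:ℝ)) ^ 2 * (Real.exp Real.pi * Real.exp (-Real.pi * (η * α - n) ^ 2)) := by
      gcongr
    _ = _ := by ring

lemma sum_inv_sq (L : ℕ) : ∑ n ∈ Finset.range L, 1 / (1 + (n:ℝ)) ^ 2 ≤ 2 - 1 / ((L:ℝ) + 1 / 2) := by
  induction L with
  | zero => norm_num
  | succ L ih =>
    rw [Finset.sum_range_succ]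
    have : 1 / (1 + (L:ℝ)) ^ 2 ≤ 1 / ((L:ℝ) + 1 / 2) - 1 / (((L + 1 : ℕ) : ℝ) + 1 / 2) := by
      push_cast
      have hL : (0:ℝ) ≤ L := Nat.cast_nonneg L
      rw [div_sub_div _ _ (by positivity) (by positivity), div_le_div_iff₀ (by positivity) (by positivity)]
      nlinarith
    linarith

lemma weighted_four (S : Finset ℕ) (c : ℕ → ℂ) (w ω : ℕ → ℝ) (hc : ∀ n ∈ S, ‖c n‖ ≤ w n)
    (η p R : ℝ) (hη : 0 < η) (hp : 0 < p) (hpR : p ≤ R) :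
    ∫ α in p..R, ‖∑ n ∈ S, c n * e (α * ω n)‖ ^ 4 * Keta η α ≤
      8 * Real.exp Real.pi * η * Q4 S w ω (1 / η) := by
  obtain ⟨L, hL⟩ := exists_nat_gt (η * R)
  have hU : 0 < 1 / η := by positivity
  have hw : ∀ n ∈ S, 0 ≤ w n := fun n hn => (norm_nonneg _).trans (hc n hn)
  have hQ := Q4_nonneg S w ω hw (1 / η)
  set G : ℝ → ℝ := fun α => ∑ n ∈ Finset.range L, 4 * Real.exp Real.pi * η ^ 2 / (1 + (n:ℝ)) ^ 2 *
      (‖∑ n ∈ S, c n * e (α * ω n)‖ ^ 4 *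
      Real.exp (-Real.pi * ((α - n / η) / (1 / η)) ^ 2)) with hG
  have hInt : ∀ n : ℕ, Integrable (fun α : ℝ => 4 * Real.exp Real.pi * η ^ 2 / (1 + (n:ℝ)) ^ 2 *
      (‖∑ n ∈ S, c n * e (α * ω n)‖ ^ 4 *
      Real.exp (-Real.pi * ((α - n / η) / (1 / η)) ^ 2))) := fun n =>
    (four_integrable_shift S c ω (1 / η) (n / η) hU).const_mul _
  have hGi : Integrable G := integrable_finsetSum _ fun n _ => hInt n
  have hG0 : ∀ α, 0 ≤ G α := fun α => Finset.sum_nonneg fun n _ => by positivity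
  rw [intervalIntegral.integral_of_le hpR]
  have s1 : ∫ α in Set.Ioc p R, ‖∑ n ∈ S, c n * e (α * ω n)‖ ^ 4 * Keta η α ≤
      ∫ α in Set.Ioc p R, G α := by
    refine integral_mono_of_nonneg (Filter.Eventually.of_forall fun α =>
      mul_nonneg (by positivity) (Keta_nonneg _ _)) hGi.integrableOn ?_
    refine (ae_restrict_iff' measurableSet_Ioc).2 (Filter.Eventually.of_forall fun α hα => ?_)
    have hα0 : 0 < α := hp.trans hα.1
    have hk := Keta_pointwise η α hη hα0 L (lt_of_le_of_lt (by gcongr; exact hα.2) hL)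
    show _ ≤ ∑ n ∈ Finset.range L, _
    calc _ ≤ ‖∑ n ∈ S, c n * e (α * ω n)‖ ^ 4 * _ := mul_le_mul_of_nonneg_left hk (by positivity)
      _ = _ := by
        rw [Finset.mul_sum]
        exact Finset.sum_congr rfl fun n _ => by ring
  have s2 : ∫ α in Set.Ioc p R, G α ≤ ∫ α, G α :=
    setIntegral_le_integral hGi (Filter.Eventually.of_forall hG0)
  have s3 : ∫ α, G α ≤ ∑ n ∈ Finset.range L, 4 * Real.exp Real.pi * η ^ 2 / (1 + (n:ℝ)) ^ 2 *
      (1 / η * Q4 S w ω (1 / η)) := by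
    rw [hG, integral_finsetSum _ fun n _ => hInt n]
    refine Finset.sum_le_sum fun n _ => ?_
    rw [integral_const_mul]
    exact mul_le_mul_of_nonneg_left (four_le_shift S c w ω hc (1 / η) (n / η) hU) (by positivity)
  refine s1.trans (s2.trans (s3.trans ?_))
  have s4 := sum_inv_sq L
  have s5 : ∑ n ∈ Finset.range L, 1 / (1 + (n:ℝ)) ^ 2 ≤ 2 := by
    have : 0 < 1 / ((L:ℝ) + 1 / 2) := by positivity
    linarith
  calc _ = (4 * Real.exp Real.pi * η * Q4 S w ω (1 / η)) * ∑ n ∈ Finset.range L, 1 / (1 + (n:ℝ)) ^ 2 := by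
        rw [Finset.mul_sum]
        refine Finset.sum_congr rfl fun n _ => ?_
        field_simp
    _ ≤ (4 * Real.exp Real.pi * η * Q4 S w ω (1 / η)) * 2 := by gcongr
    _ = _ := by ring

theorem Sk_fourth_Keta_bound (δ : ℝ) (hδ0 : 0 < δ) (hδ1 : δ < 1) (l : ℝ) (hl : l ≠ 0)
    (k ε : ℝ) (hk : 1 < k) (hε : 0 < ε) :
    ∃ C > 0, ∀ X ≥ (2 : ℝ), ∀ η : ℝ, 0 < η → η < 1 → ∀ R > 1 / η, ∀ P : ℝ, 0 < P → P < X →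
      ∫ α in (P / X)..R, ‖Sk δ X k (l * α)‖ ^ 4 * Keta η α
        ≤ C * η * max (X ^ (2 / k)) (X ^ (4 / k - 1)) * X ^ ε := by
  obtain ⟨j, hj⟩ := exists_nat_gt (2 / ε)
  rw [div_lt_iff₀ hε] at hj
  set γ : ℝ := 2 / (2 * j + 1) with hγ
  have hγ0 : 0 < γ := by positivity
  have hγε : γ ≤ ε / 2 := by
    rw [hγ, div_le_div_iff₀ (by positivity) (by norm_num)]
    nlinarith
  have hk0 : 0 < k := by linarith
  have ha : 0 < δ ^ (1 / k) := Real.rpow_pos_of_pos hδ0 _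
  have hab : δ ^ (1 / k) < 1 := Real.rpow_lt_one hδ0.le hδ1 (by positivity)
  obtain ⟨C, hC, hRS⟩ := RS_all j k hk _ 1 ha hab
  have hl0 : 0 < |l| := abs_pos.2 hl
  refine ⟨8 * Real.exp Real.pi * (1 / (ε / 8)) ^ 4 * (C * (1 / |l| + 1)), by positivity, ?_⟩
  intro X hX η hη hη1 R hR P hP hPX
  have hX0 : 0 < X := by linarith
  have hX1 : 1 ≤ X := by linarith
  set S := (Finset.Icc 1 (Nat.floor X)).filter
      (fun p : ℕ => p.Prime ∧ δ * X ≤ (p : ℝ) ^ k ∧ (p : ℝ) ^ k ≤ X) with hS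
  have hPX1 : P / X < 1 := by rw [div_lt_one hX0]; exact hPX
  have hη2 : 1 < 1 / η := by rw [lt_div_iff₀ hη]; linarith
  have hSk : ∀ α : ℝ, Sk δ X k (l * α) = ∑ n ∈ S, (Real.log n : ℂ) * e (α * (l * (n:ℝ) ^ k)) := by
    intro α
    unfold Sk
    refine Finset.sum_congr rfl fun n _ => ?_
    congr 2; ring
  simp only [hSk]
  have hlogX : 0 ≤ Real.log X := Real.log_nonneg hX1
  have hc : ∀ n ∈ S, ‖(Real.log n : ℂ)‖ ≤ Real.log X := by
    intro n hn
    have h1 := Finset.mem_Icc.1 (Finset.mem_filter.1 hn).1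
    have h2 : (1:ℝ) ≤ n := by exact_mod_cast h1.1
    have h3 : (n:ℝ) ≤ X := (Nat.le_floor_iff hX0.le).1 h1.2
    rw [Complex.norm_real, Real.norm_eq_abs, abs_of_nonneg (Real.log_nonneg h2)]
    exact Real.log_le_log (by linarith) h3
  have m1 := weighted_four S (fun n => (Real.log n : ℂ)) (fun _ => Real.log X)
    (fun n => l * (n:ℝ) ^ k) hc η (P / X) R hη (by positivity) (by linarith)
  refine m1.trans ?_
  set N := X ^ (1 / k) with hN
  have hN0 : 0 < N := Real.rpow_pos_of_pos hX0 _
  have hN1 : 1 ≤ N := Real.one_le_rpow hX1 (by positivity)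
  have hNk : N ^ k = X := by
    rw [hN, ← Real.rpow_mul hX0.le, one_div, inv_mul_cancel₀ hk0.ne', Real.rpow_one]
  have hSr : ∀ n ∈ S, δ ^ (1 / k) * N ≤ n ∧ (n:ℝ) ≤ 1 * N := by
    intro n hn
    obtain ⟨-, -, h1, h2⟩ := Finset.mem_filter.1 hn
    have hn0 : (0:ℝ) ≤ n := Nat.cast_nonneg n
    have en : ((n:ℝ) ^ k) ^ (1 / k) = n := by
      rw [← Real.rpow_mul hn0, mul_one_div_cancel hk0.ne', Real.rpow_one]
    constructor
    · rw [hN, ← Real.mul_rpow hδ0.le hX0.le, ← en]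
      exact Real.rpow_le_rpow (by positivity) h1 (by positivity)
    · rw [one_mul, ← en, hN]
      exact Real.rpow_le_rpow (by positivity) h2 (by positivity)
  have m2 := hRS N hN1 (|l| * X) (by positivity) S hSr
  rw [hNk, mul_div_cancel_right₀ _ hX0.ne'] at m2
  set M := max (X ^ (2 / k)) (X ^ (4 / k - 1)) with hM
  have hM0 : 0 < M := lt_max_of_lt_left (Real.rpow_pos_of_pos hX0 _)
  have hXe : 1 ≤ X ^ (ε / 2) := Real.one_le_rpow hX1 (by positivity)
  have b1 : N ^ 4 / (|l| * X) ≤ 1 / |l| * (M * X ^ (ε / 2)) := by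
    have : N ^ 4 / X = X ^ (4 / k - 1) := by
      rw [hN, ← Real.rpow_natCast, ← Real.rpow_mul hX0.le, Real.rpow_sub hX0, Real.rpow_one]
      congr 2
      push_cast; ring
    calc N ^ 4 / (|l| * X) = 1 / |l| * (N ^ 4 / X * 1) := by field_simp
      _ ≤ 1 / |l| * (M * X ^ (ε / 2)) := by
        rw [this]
        gcongr
        exact le_max_right _ _
  have b2 : N ^ (2 + γ) ≤ M * X ^ (ε / 2) := by
    have e1 : N ^ (2 + γ) = X ^ (2 / k) * X ^ (γ / k) := by
      rw [hN, ← Real.rpow_mul hX0.le, ← Real.rpow_add hX0]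
      congr 1; ring
    rw [e1]
    have e2 : γ / k ≤ ε / 2 := (div_le_self hγ0.le hk.le).trans hγε
    have e3 : X ^ (γ / k) ≤ X ^ (ε / 2) := Real.rpow_le_rpow_of_exponent_le hX1 e2
    have e4 : X ^ (2 / k) ≤ M := le_max_left _ _
    exact mul_le_mul e4 e3 (Real.rpow_pos_of_pos hX0 _).le hM0.le
  have m3 : Q4 S (fun _ => 1) (fun n => (n:ℝ) ^ k) |l| ≤ C * (1 / |l| + 1) * (M * X ^ (ε / 2)) := by
    refine m2.trans ?_
    calc _ ≤ C * (1 / |l| * (M * X ^ (ε / 2)) + M * X ^ (ε / 2)) :=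
          mul_le_mul_of_nonneg_left (add_le_add b1 b2) hC.le
      _ = _ := by ring
  have m4 : Q4 S (fun _ => Real.log X) (fun n => l * (n:ℝ) ^ k) (1 / η) ≤
      Real.log X ^ 4 * Q4 S (fun _ => 1) (fun n => (n:ℝ) ^ k) |l| := by
    rw [Q4_scale_freq, Q4_scale_w]
    refine mul_le_mul_of_nonneg_left ?_ (by positivity)
    exact Q4_anti S _ _ (fun _ _ => zero_le_one) hl0.le (le_mul_of_one_le_right hl0.le hη2.le)
  have m5 : Real.log X ^ 4 ≤ (1 / (ε / 8)) ^ 4 * X ^ (ε / 2) := by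
    have := pow_le_pow_left₀ hlogX (Real.log_le_rpow_div hX0.le (by positivity : 0 < ε / 8)) 4
    refine this.trans (le_of_eq ?_)
    rw [div_pow, ← Real.rpow_natCast (X ^ (ε / 8)) 4, ← Real.rpow_mul hX0.le]
    rw [show ε / 8 * ((4:ℕ):ℝ) = ε / 2 by push_cast; ring]
    field_simp
  have hXX : X ^ (ε / 2) * X ^ (ε / 2) = X ^ ε := by
    rw [← Real.rpow_add hX0]; congr 1; ring
  have hQ0 := Q4_nonneg S (fun _ => 1) (fun n => (n:ℝ) ^ k) (fun _ _ => zero_le_one) |l|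
  calc 8 * Real.exp Real.pi * η * Q4 S (fun _ => Real.log X) (fun n => l * (n:ℝ) ^ k) (1 / η)
      ≤ 8 * Real.exp Real.pi * η * (Real.log X ^ 4 * Q4 S (fun _ => 1) (fun n => (n:ℝ) ^ k) |l|) := by
        gcongr
    _ ≤ 8 * Real.exp Real.pi * η * (((1 / (ε / 8)) ^ 4 * X ^ (ε / 2)) *
        (C * (1 / |l| + 1) * (M * X ^ (ε / 2)))) := by
        gcongr
    _ = 8 * Real.exp Real.pi * (1 / (ε / 8)) ^ 4 * (C * (1 / |l| + 1)) * η * M *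
        (X ^ (ε / 2) * X ^ (ε / 2)) := by ring
    _ = _ := by rw [hXX]
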